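/- Let V be a valuation ring containing its residue field k, with value group Γ a free abelian group. Then V is a filtered union of its k-subalgebras that are complete intersection k-algebras; that is, the set of such subalgebras is nonempty, directed under inclusion, and its union is all of V. -/

import Mathlib

/-- A commutative ring `S` is a *filtered union* of those of its `R`-subalgebras
satisfying the class (predicate) `C` if the collection of subalgebras satisfying `C`
is nonempty, directed under inclusion, and its union is all of `S`. -/
def Subalgebra.IsFilteredUnion {R S : Type*} [CommSemiring R] [CommSemiring S]
    [Algebra R S] (C : Subalgebra R S → Prop) : Prop :=
  (∃ A, C A) ∧ DirectedOn (· ≤ ·) {A | C A} ∧ ∀ s : S, ∃ A, C A ∧ s ∈ A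

/-- An `R`-algebra `A` is a *complete intersection `R`-algebra of finite type* if it is
isomorphic to `R[Y₁, …, Y_N]/(f₁, …, f_r)` for a regular sequence `f₁, …, f_r` of the
polynomial ring `R[Y₁, …, Y_N]`. -/
def Algebra.IsCompleteIntersectionOfFiniteType (R A : Type*) [CommRing R] [CommRing A]
    [Algebra R A] : Prop :=
  ∃ (N r : ℕ) (f : Fin r → MvPolynomial (Fin N) R),
    RingTheory.Sequence.IsRegular (MvPolynomial (Fin N) R) (List.ofFn f) ∧
    Nonempty ((MvPolynomial (Fin N) R ⧸ Ideal.span (Set.range f)) ≃ₐ[R] A)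

open Polynomial

namespace Algebra.IsCompleteIntersectionOfFiniteType

open RingTheory.Sequence

variable {k A B : Type*} [Field k] [CommRing A] [Algebra k A] [CommRing B] [Algebra k B]

theorem iff_exists_surjective : IsCompleteIntersectionOfFiniteType k A ↔
    Nontrivial A ∧ ∃ (N : ℕ) (rs : List (MvPolynomial (Fin N) k))
      (π : MvPolynomial (Fin N) k →ₐ[k] A), IsWeaklyRegular (MvPolynomial (Fin N) k) rs ∧
        Function.Surjective π ∧ RingHom.ker π = Ideal.ofList rs := by
  have hlist {n r : ℕ} (f : Fin r → MvPolynomial (Fin n) k) :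
      Ideal.ofList (List.ofFn f) = Ideal.span (Set.range f) := by
    simp only [Ideal.ofList]
    congr 1
    ext x
    simp [List.mem_ofFn]
  constructor
  · rintro ⟨N, r, f, hf, ⟨e⟩⟩
    have hker : RingHom.ker (e.toAlgHom.comp
        (Ideal.Quotient.mkₐ k (Ideal.span (Set.range f)))) = Ideal.ofList (List.ofFn f) := by
      rw [hlist]
      ext x
      simp [RingHom.mem_ker, Ideal.Quotient.eq_zero_iff_mem]
    refine ⟨?_, N, List.ofFn f, e.toAlgHom.comp (Ideal.Quotient.mkₐ k _), hf.1,
      e.surjective.comp Ideal.Quotient.mk_surjective, hker⟩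
    have : Nontrivial (MvPolynomial (Fin N) k ⧸ Ideal.span (Set.range f)) := by
      rw [Ideal.Quotient.nontrivial_iff, ← hlist]
      intro h
      exact hf.2 (by simp [h])
    exact e.symm.toEquiv.nontrivial
  · rintro ⟨hA, N, rs, π, hreg, hsurj, hker⟩
    refine ⟨N, rs.length, rs.get, ⟨by simpa using hreg, ?_⟩, ⟨?_⟩⟩
    · rw [List.ofFn_get, ← hker]
      intro h
      rw [smul_eq_mul, Ideal.mul_top] at h
      exact RingHom.ker_ne_top π h.symm
    · refine (Ideal.quotientEquivAlgOfEq k ?_).trans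
        (Ideal.quotientKerAlgEquivOfSurjective hsurj)
      rw [← hlist, List.ofFn_get]
      exact hker.symm

theorem finiteType (h : IsCompleteIntersectionOfFiniteType k A) : Algebra.FiniteType k A := by
  obtain ⟨-, N, rs, π, -, hsurj, -⟩ := iff_exists_surjective.1 h
  exact Algebra.FiniteType.of_surjective π hsurj

theorem of_algEquiv (h : IsCompleteIntersectionOfFiniteType k A) (e : A ≃ₐ[k] B) :
    IsCompleteIntersectionOfFiniteType k B := by
  obtain ⟨N, r, f, hf, ⟨e'⟩⟩ := h
  exact ⟨N, r, f, hf, ⟨e'.trans e⟩⟩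

theorem mvPolynomial (N : ℕ) : IsCompleteIntersectionOfFiniteType k (MvPolynomial (Fin N) k) :=
  iff_exists_surjective.2 ⟨inferInstance, N, [], AlgHom.id k _, .nil _ _,
    Function.surjective_id, by ext; simp⟩

theorem of_surjective_of_algEquiv [Nontrivial A] {Q : Type*} [CommRing Q] [Algebra k Q] {N : ℕ}
    (e : MvPolynomial (Fin N) k ≃ₐ[k] Q) {rs : List Q} (hrs : IsWeaklyRegular Q rs)
    (π : Q →ₐ[k] A) (hπ : Function.Surjective π) (hker : RingHom.ker π = Ideal.ofList rs) :
    IsCompleteIntersectionOfFiniteType k A := by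
  refine iff_exists_surjective.2 ⟨inferInstance, N, rs.map (e.symm : Q →+* _),
    π.comp e.toAlgHom, ?_, hπ.comp e.surjective, ?_⟩
  · refine (AddEquiv.isWeaklyRegular_congr (e := e.symm.toRingEquiv.toAddEquiv) ?_).1 hrs
    rw [List.forall₂_map_right_iff, List.forall₂_same]
    intro x _ y
    simp
  · rw [← Ideal.map_ofList, ← hker]
    change RingHom.ker ((π : Q →+* A).comp (e : MvPolynomial (Fin N) k →+* Q)) = _
    rw [← RingHom.comap_ker]
    exact (Ideal.map_symm (e : MvPolynomial (Fin N) k ≃+* Q)).symm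

/-- A polynomial ring in one variable over a complete intersection algebra is a complete
intersection algebra. -/
theorem polynomial (h : IsCompleteIntersectionOfFiniteType k A) :
    IsCompleteIntersectionOfFiniteType k A[X] := by
  obtain ⟨hA, N, rs, π, hreg, hsurj, hker⟩ := iff_exists_surjective.1 h
  refine of_surjective_of_algEquiv (MvPolynomial.finSuccEquiv k N) (rs := rs.map C)
    (IsWeaklyRegular.of_flat (S := (MvPolynomial (Fin N) k)[X]) hreg)
    (Polynomial.mapAlgHom π) (Polynomial.map_surjective π.toRingHom hsurj) ?_
  rw [← Ideal.map_ofList, ← hker]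
  exact Polynomial.ker_mapRingHom (π : MvPolynomial (Fin N) k →+* A)

/-- The quotient of an integral complete intersection algebra by a nonzero nonunit is a complete
intersection algebra. -/
theorem quotient_span_singleton [IsDomain A] (h : IsCompleteIntersectionOfFiniteType k A)
    {a : A} (ha : a ≠ 0) (hu : ¬ IsUnit a) :
    IsCompleteIntersectionOfFiniteType k (A ⧸ Ideal.span {a}) := by
  obtain ⟨hA, N, rs, π, hreg, hsurj, hker⟩ := iff_exists_surjective.1 h
  obtain ⟨b, rfl⟩ := hsurj a
  refine iff_exists_surjective.2 ⟨?_, N, rs ++ [b], (Ideal.Quotient.mkₐ k _).comp π, ?_,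
    Ideal.Quotient.mk_surjective.comp hsurj, ?_⟩
  · rwa [Ideal.Quotient.nontrivial_iff, Ne, Ideal.span_singleton_eq_top]
  · rw [isWeaklyRegular_append_iff, isWeaklyRegular_singleton_iff]
    refine ⟨hreg, (isSMulRegular_iff_right_eq_zero_of_smul).2 fun x hx ↦ ?_⟩
    obtain ⟨x, rfl⟩ := Submodule.Quotient.mk_surjective _ x
    rw [← Submodule.Quotient.mk_smul, Submodule.Quotient.mk_eq_zero, smul_eq_mul, smul_eq_mul,
      Ideal.mul_top, ← hker, RingHom.mem_ker, map_mul] at hx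
    rw [Submodule.Quotient.mk_eq_zero, smul_eq_mul, Ideal.mul_top, ← hker, RingHom.mem_ker]
    exact (mul_eq_zero.1 hx).resolve_left ha
  · rw [Ideal.ofList_append, Ideal.ofList_singleton, ← hker]
    have := Ideal.comap_map_of_surjective (π : MvPolynomial (Fin N) k →+* A) hsurj
      (Ideal.span {b})
    rw [Ideal.map_span, Set.image_singleton] at this
    ext x
    have h3 := SetLike.ext_iff.1 this x
    rw [Ideal.mem_comap, sup_comm] at h3
    refine Iff.trans ?_ h3
    simp [RingHom.mem_ker, Ideal.Quotient.eq_zero_iff_mem]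

end Algebra.IsCompleteIntersectionOfFiniteType

section LinearRelation

variable {S T : Type*} [CommRing S] [IsDomain S] [CommRing T]

/-- If `F` is a nonzerodivisor modulo `c` then the kernel of the evaluation at `z = F / c` is
generated by `c X - F`. -/
theorem Polynomial.C_mul_X_sub_C_dvd_of_eval₂_eq_zero {g : S →+* T} (hg : Function.Injective g)
    {c F : S} (hc : c ≠ 0) (hF : ∀ b, c ∣ F * b → c ∣ b) {z : T} (hz : g c * z = g F)
    {p : S[X]} (hp : p.eval₂ g z = 0) : C c * X - C F ∣ p := by
  have hpow (n : ℕ) : ∀ b, c ∣ F ^ n * b → c ∣ b := by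
    induction n with
    | zero => simp
    | succ n ih =>
      intro b hb
      rw [pow_succ, mul_assoc] at hb
      exact hF b (ih _ hb)
  induction hn : p.natDegree using Nat.strong_induction_on generalizing p with
  | _ n ih =>
  obtain rfl | hn0 := Nat.eq_zero_or_pos n
  · rw [Polynomial.eq_C_of_natDegree_eq_zero hn, eval₂_C] at hp
    rw [Polynomial.eq_C_of_natDegree_eq_zero hn, (map_eq_zero_iff g hg).1 hp]
    simp
  have hp0 : p ≠ 0 := by rintro rfl; simp at hn; omega
  have h1 : (p.scaleRoots c).eval F = 0 := by
    apply hg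
    rw [map_zero, ← eval₂_at_apply, ← hz, scaleRoots_eval₂_mul, hp, mul_zero]
  have h2 : c ∣ p.leadingCoeff := by
    refine hpow n _ ?_
    rw [eval_eq_sum_range, Finset.sum_range_succ, natDegree_scaleRoots, hn] at h1
    have h3 : c ∣ ∑ i ∈ Finset.range n, (p.scaleRoots c).coeff i * F ^ i := by
      refine Finset.dvd_sum fun i hi ↦ ?_
      rw [coeff_scaleRoots, hn]
      have : n - i ≠ 0 := by have := Finset.mem_range.1 hi; omega
      exact ((dvd_pow_self c this).mul_left _).mul_right _
    have h4 := (dvd_add_right h3).1 (h1 ▸ dvd_zero c)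
    rw [coeff_scaleRoots, hn, Nat.sub_self, pow_zero, mul_one, mul_comm] at h4
    rwa [leadingCoeff, hn]
  obtain ⟨b, hb⟩ := h2
  have hb0 : b ≠ 0 := by
    rintro rfl
    simp at hb
    exact hp0 hb
  set q : S[X] := C b * X ^ (n - 1) * (C c * X - C F) with hq
  have hdeg1 : (C c * X - C F).degree = 1 := by
    rw [sub_eq_add_neg, ← C_neg]; exact degree_linear hc
  have hlc1 : (C c * X - C F).leadingCoeff = c := by
    rw [sub_eq_add_neg, ← C_neg]; exact leadingCoeff_linear hc
  have hqd : q.degree = p.degree := by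
    rw [hq, degree_mul, hdeg1, degree_C_mul_X_pow _ hb0, degree_eq_natDegree hp0, hn]
    norm_cast
    omega
  have hql : p.leadingCoeff = q.leadingCoeff := by
    rw [hq, leadingCoeff_mul, hlc1, leadingCoeff_C_mul_X_pow, hb, mul_comm]
  have hlt := degree_sub_lt_left hqd.symm hp0 hql
  have hqe : q.eval₂ g z = 0 := by simp [hq, eval₂_mul, hz]
  have hdvd : C c * X - C F ∣ p - q := by
    by_cases h0 : p - q = 0
    · simp [h0]
    refine ih (p - q).natDegree ?_ (by rw [eval₂_sub, hp, hqe, sub_zero]) rfl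
    rw [← hn]
    exact natDegree_lt_natDegree h0 hlt
  exact (dvd_sub_left (Dvd.intro_left _ rfl)).1 hdvd

end LinearRelation

/-- A ring homomorphism for which the formation of colon ideals `(J : a)` commutes with extension
of ideals. -/
def RingHom.ColonFlat {R S : Type*} [CommRing R] [CommRing S] (f : R →+* S) : Prop :=
  ∀ (J : Ideal R) (a : R) (b : S), f a * b ∈ J.map f → b ∈ (J.colon {a}).map f

/-- If `F` is a nonzerodivisor on the special fibre of a flat local homomorphism of Noetherian
local rings, then it is a nonzerodivisor modulo every ideal of the base. -/
theorem RingHom.ColonFlat.mem_map_of_mul_mem {R S : Type*} [CommRing R] [CommRing S]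
    [IsNoetherianRing R] [IsLocalRing R] [IsNoetherianRing S] [IsLocalRing S] {f : R →+* S}
    [IsLocalHom f] (hf : f.ColonFlat) {F : S}
    (hF : ∀ b, F * b ∈ (IsLocalRing.maximalIdeal R).map f →
      b ∈ (IsLocalRing.maximalIdeal R).map f) (J : Ideal R) :
    ∀ b, F * b ∈ J.map f → b ∈ J.map f := by
  induction J using WellFoundedGT.induction with
  | _ J ih =>
  by_cases hJ : J = ⊤
  · simp [hJ, Ideal.map_top]
  by_cases hJm : J = IsLocalRing.maximalIdeal R
  · rwa [hJm]
  have hlt := lt_of_le_of_ne (IsLocalRing.le_maximalIdeal hJ) hJm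
  have key (a : R) (ha : a ∉ J) (b : S) (hb : F * b ∈ J.map f) :
      ∃ j ∈ J.map f, ∃ b₁, b = j + f a * b₁ ∧ F * b₁ ∈ (J.colon {a}).map f := by
    have h1 : J < J ⊔ Ideal.span {a} := by
      refine lt_of_le_of_ne le_sup_left fun h ↦ ha ?_
      rw [h]
      exact Ideal.mem_sup_right (Ideal.mem_span_singleton_self a)
    have h2 := ih _ h1 b (Ideal.map_mono le_sup_left hb)
    rw [Ideal.map_sup, Ideal.map_span, Set.image_singleton, Submodule.mem_sup] at h2
    obtain ⟨j, hj, y, hy, rfl⟩ := h2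
    obtain ⟨b₁, rfl⟩ := Ideal.mem_span_singleton'.1 hy
    refine ⟨j, hj, b₁, by ring, hf J a _ ?_⟩
    have := sub_mem hb (Ideal.mul_mem_left _ F hj)
    convert this using 1
    ring
  by_cases hex : ∃ a, a ∉ J ∧ ¬ J.colon {a} ≤ J
  · obtain ⟨a, ha, hcol⟩ := hex
    intro b hb
    obtain ⟨j, hj, b₁, rfl, hb₁⟩ := key a ha b hb
    have hlt' : J < J.colon {a} := lt_of_le_not_ge
      (fun x hx ↦ Submodule.mem_colon_singleton.2 (Ideal.mul_mem_right _ _ hx)) hcol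
    have h3 := ih _ hlt' b₁ hb₁
    refine add_mem hj ?_
    have h4 : (J.colon {a}).map f * Ideal.span {f a} ≤ J.map f := by
      rw [← Set.image_singleton, ← Ideal.map_span, ← Ideal.map_mul]
      refine Ideal.map_mono (Ideal.mul_le.2 fun r hr s hs ↦ ?_)
      obtain ⟨t, rfl⟩ := Ideal.mem_span_singleton'.1 hs
      have := Submodule.mem_colon_singleton.1 hr
      rw [smul_eq_mul] at this
      rw [mul_left_comm]
      exact Ideal.mul_mem_left _ _ this
    rw [mul_comm]
    exact h4 (Ideal.mul_mem_mul h3 (Ideal.mem_span_singleton_self _))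
  · push Not at hex
    obtain ⟨a, ham, haJ⟩ := SetLike.exists_of_lt hlt
    have hN : (J.map f).colon {F} ≤ J.map f := by
      refine Submodule.le_of_le_smul_of_le_jacobson_bot (I := Ideal.span {f a})
        (IsNoetherian.noetherian _) ?_ ?_
      · rw [IsLocalRing.jacobson_eq_maximalIdeal _ bot_ne_top, Ideal.span_singleton_le_iff_mem]
        exact (IsLocalRing.mem_maximalIdeal _).2 fun hu ↦
          (IsLocalRing.mem_maximalIdeal _).1 ham (isUnit_of_map_unit f a hu)
      · intro b hb
        rw [Submodule.mem_colon_singleton, smul_eq_mul, mul_comm] at hb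
        obtain ⟨j, hj, b₁, rfl, hb₁⟩ := key a haJ b hb
        refine Submodule.add_mem_sup hj (Submodule.smul_mem_smul
          (Ideal.mem_span_singleton_self _) ?_)
        rw [Submodule.mem_colon_singleton, smul_eq_mul, mul_comm]
        exact Ideal.map_mono (hex a haJ) hb₁
    intro b hb
    exact hN (by rwa [Submodule.mem_colon_singleton, smul_eq_mul, mul_comm])

section Simple

variable {R S T : Type*} [CommRing R] [CommRing S] [CommRing T] {f : R →+* S} {g : S →+* T}
  {z : T} {ρ : S[X]}

/-- `T` is a localization of a quotient `S[X] / (ρ)`, with `X` mapping to `z`. -/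
structure IsLocalizedSimple (g : S →+* T) (z : T) (ρ : S[X]) : Prop where
  exists_eq : ∀ x, ∃ p q : S[X], IsUnit (q.eval₂ g z) ∧ q.eval₂ g z * x = p.eval₂ g z
  eval₂_eq_zero : ρ.eval₂ g z = 0
  dvd : ∀ p : S[X], p.eval₂ g z = 0 → ρ ∣ p

theorem IsLocalizedSimple.exists_mul_mem (h : IsLocalizedSimple g z ρ) (J : Ideal R) {p : S[X]}
    (hp : p.eval₂ g z ∈ J.map (g.comp f)) :
    ∃ q : S[X], IsUnit (q.eval₂ g z) ∧ q * p ∈ (J.map f).map C ⊔ Ideal.span {ρ} := by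
  set I := (J.map f).map (C : S →+* S[X]) with hI
  have key : ∀ x ∈ J.map (g.comp f), ∃ q : S[X], IsUnit (q.eval₂ g z) ∧
      ∃ r ∈ I, q.eval₂ g z * x = r.eval₂ g z := by
    intro x hx
    induction hx using Submodule.span_induction with
    | mem x hx =>
      obtain ⟨j, hj, rfl⟩ := hx
      exact ⟨1, by simp, C (f j), Ideal.mem_map_of_mem _ (Ideal.mem_map_of_mem _ hj), by simp⟩
    | zero => exact ⟨1, by simp, 0, zero_mem _, by simp⟩
    | add x y _ _ hx hy =>
      obtain ⟨q, hq, r, hr, h1⟩ := hx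
      obtain ⟨q', hq', r', hr', h2⟩ := hy
      refine ⟨q * q', by rw [eval₂_mul]; exact hq.mul hq', q' * r + q * r',
        add_mem (Ideal.mul_mem_left _ _ hr) (Ideal.mul_mem_left _ _ hr'), ?_⟩
      simp only [eval₂_mul, eval₂_add, ← h1, ← h2]
      ring
    | smul a x _ hx =>
      obtain ⟨q, hq, r, hr, h1⟩ := hx
      obtain ⟨p', q', hq', h2⟩ := h.exists_eq a
      refine ⟨q * q', by rw [eval₂_mul]; exact hq.mul hq', p' * r, Ideal.mul_mem_left _ _ hr, ?_⟩
      simp only [eval₂_mul, ← h1, ← h2, smul_eq_mul]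
      ring
  obtain ⟨q, hq, r, hr, h1⟩ := key _ hp
  refine ⟨q, hq, ?_⟩
  have h2 : ρ ∣ q * p - r := h.dvd _ (by rw [eval₂_sub, eval₂_mul, h1, sub_self])
  rw [← sub_add_cancel (q * p) r]
  exact add_mem (Ideal.mem_sup_right (Ideal.mem_span_singleton.2 h2)) (Ideal.mem_sup_left hr)

theorem IsLocalizedSimple.eval₂_mem (h : IsLocalizedSimple g z ρ) {J : Ideal R} {p : S[X]}
    (hp : p ∈ (J.map f).map C ⊔ Ideal.span {ρ}) : p.eval₂ g z ∈ J.map (g.comp f) := by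
  have : (J.map f).map C ⊔ Ideal.span {ρ} ≤ (J.map (g.comp f)).comap (eval₂RingHom g z) := by
    refine sup_le ?_ ?_
    · rw [Ideal.map_le_iff_le_comap, Ideal.map_le_iff_le_comap]
      intro j hj
      simpa using Ideal.mem_map_of_mem (g.comp f) hj
    · rw [Ideal.span_singleton_le_iff_mem]
      simp [h.eval₂_eq_zero]
  exact this hp

theorem IsLocalizedSimple.mem_of_unit_mul_mem (h : IsLocalizedSimple g z ρ) {J : Ideal R}
    {p q q' : S[X]} {x : T} (hq : IsUnit (q.eval₂ g z)) (hx : q.eval₂ g z * x = p.eval₂ g z)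
    (hq' : IsUnit (q'.eval₂ g z)) (hp : q' * p ∈ (J.map f).map C ⊔ Ideal.span {ρ}) :
    x ∈ J.map (g.comp f) := by
  have h1 := h.eval₂_mem hp
  rw [eval₂_mul, ← hx, Ideal.unit_mul_mem_iff_mem _ hq', Ideal.unit_mul_mem_iff_mem _ hq] at h1
  exact h1

theorem IsLocalizedSimple.colonFlat (h : IsLocalizedSimple g z ρ) (hf : f.ColonFlat)
    (hρ : ∀ (J : Ideal R) (s : S[X]), ρ * s ∈ (J.map f).map C →
      ∃ s' ∈ (J.map f).map C, ρ * s = ρ * s') : (g.comp f).ColonFlat := by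
  intro J a x hx
  obtain ⟨p, q, hq, hqx⟩ := h.exists_eq x
  have hp : (C (f a) * p).eval₂ g z ∈ J.map (g.comp f) := by
    rw [eval₂_mul, eval₂_C, ← hqx, mul_left_comm]
    exact Ideal.mul_mem_left _ _ hx
  obtain ⟨q', hq', hmem⟩ := h.exists_mul_mem J hp
  refine h.mem_of_unit_mul_mem hq hqx hq' ?_
  obtain ⟨j, hj, y, hy, hsum⟩ := Submodule.mem_sup.1 hmem
  obtain ⟨s, rfl⟩ := Ideal.mem_span_singleton.1 hy
  have hs : ρ * s ∈ ((J ⊔ Ideal.span {a}).map f).map C := by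
    have : ρ * s = q' * (C (f a) * p) - j := by rw [← hsum]; ring
    rw [this]
    refine sub_mem (Ideal.mul_mem_left _ _ (Ideal.mul_mem_right _ _ ?_))
      (Ideal.map_mono (Ideal.map_mono le_sup_left) hj)
    exact Ideal.mem_map_of_mem _ (Ideal.mem_map_of_mem _
      (Ideal.mem_sup_right (Ideal.mem_span_singleton_self a)))
  obtain ⟨s', hs', hss⟩ := hρ _ s hs
  rw [Ideal.map_sup, Ideal.map_sup, Ideal.map_span, Ideal.map_span, Set.image_singleton,
    Set.image_singleton, Submodule.mem_sup] at hs'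
  obtain ⟨j', hj', y, hy, rfl⟩ := hs'
  obtain ⟨t, rfl⟩ := Ideal.mem_span_singleton.1 hy
  have h5 : q' * p - ρ * t ∈ ((J.colon {a}).map f).map C := by
    rw [Ideal.mem_map_C_iff]
    intro n
    refine hf J a _ ?_
    rw [← coeff_C_mul]
    refine Ideal.mem_map_C_iff.1 ?_ n
    have : C (f a) * (q' * p - ρ * t) = j + ρ * j' := by
      rw [hss] at hsum
      linear_combination -hsum
    rw [this]
    exact add_mem hj (Ideal.mul_mem_left _ _ hj')
  rw [← sub_add_cancel (q' * p) (ρ * t)]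
  exact add_mem (Ideal.mem_sup_left h5) (Ideal.mem_sup_right
    (Ideal.mul_mem_right _ _ (Ideal.mem_span_singleton_self _)))

/-- A polynomial with a unit coefficient is a nonzerodivisor modulo every extended ideal. -/
theorem Polynomial.mem_map_C_of_mul_mem {I : Ideal S} {H p : S[X]} {n : ℕ}
    (hH : IsUnit (H.coeff n)) (hp : H * p ∈ I.map C) : p ∈ I.map C := by
  have hker : I.map C = RingHom.ker (mapRingHom (Ideal.Quotient.mk I)) := by
    rw [ker_mapRingHom, Ideal.mk_ker]
  rw [hker, RingHom.mem_ker] at hp ⊢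
  rw [map_mul] at hp
  have hreg : mapRingHom (Ideal.Quotient.mk I) H ∈ nonZeroDivisors (S ⧸ I)[X] := by
    rw [Polynomial.mem_nonZeroDivisors_iff]
    intro a ha
    have h1 := congrArg (fun r ↦ coeff r n) ha
    simp only [coeff_smul, coe_mapRingHom, coeff_map, smul_eq_mul, coeff_zero] at h1
    exact ((hH.map (Ideal.Quotient.mk I)).mul_left_eq_zero).1 h1
  exact (mul_right_mem_nonZeroDivisors_eq_zero_iff hreg).1 (by rw [mul_comm]; exact hp)

theorem IsLocalizedSimple.mem_of_eval₂_mul_mem (h : IsLocalizedSimple g z ρ) {J : Ideal R}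
    {I : Ideal S} (hI : (J.map f).map C ⊔ Ideal.span {ρ} = I.map C) {H : S[X]} {n : ℕ}
    (hH : IsUnit (H.coeff n)) {x : T} (hx : H.eval₂ g z * x ∈ J.map (g.comp f)) :
    x ∈ J.map (g.comp f) := by
  obtain ⟨p, q, hq, hqx⟩ := h.exists_eq x
  have hp : (H * p).eval₂ g z ∈ J.map (g.comp f) := by
    rw [eval₂_mul, ← hqx, mul_left_comm]
    exact Ideal.mul_mem_left _ _ hx
  obtain ⟨q', hq', hmem⟩ := h.exists_mul_mem J hp
  refine h.mem_of_unit_mul_mem hq hqx hq' ?_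
  rw [hI] at hmem ⊢
  rw [mul_left_comm] at hmem
  exact mem_map_C_of_mul_mem hH hmem

theorem Polynomial.C_mul_X_sub_C_regular_mod {I : Ideal S} {c F : S}
    (hF : ∀ b, F * b ∈ I → b ∈ I) {s : S[X]} (hs : (C c * X - C F) * s ∈ I.map C) :
    s ∈ I.map C := by
  rw [Ideal.mem_map_C_iff] at hs ⊢
  intro n
  induction n with
  | zero =>
    have := hs 0
    rw [sub_mul, mul_assoc, coeff_sub, coeff_C_mul, coeff_C_mul, coeff_X_mul_zero, mul_zero,
      zero_sub, neg_mem_iff] at this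
    exact hF _ this
  | succ n ih =>
    have := hs (n + 1)
    rw [sub_mul, mul_assoc, coeff_sub, coeff_C_mul, coeff_C_mul, coeff_X_mul] at this
    exact hF _ ((Submodule.sub_mem_iff_right _ (Ideal.mul_mem_left _ c ih)).1 this)

end Simple

namespace Subalgebra

section AdjoinElt

variable {k Λ : Type*} [CommRing k] [CommRing Λ] [Algebra k Λ]

/-- The subalgebra `A[z]`, as the range of the evaluation of polynomials over `A`. -/
noncomputable def adjoinElt (A : Subalgebra k Λ) (z : Λ) : Subalgebra k Λ :=
  ((aeval z : A[X] →ₐ[A] Λ).restrictScalars k).range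

theorem le_adjoinElt (A : Subalgebra k Λ) (z : Λ) : A ≤ A.adjoinElt z :=
  fun x hx ↦ ⟨C ⟨x, hx⟩, by simp [Subalgebra.algebraMap_eq]⟩

theorem self_mem_adjoinElt (A : Subalgebra k Λ) (z : Λ) : z ∈ A.adjoinElt z :=
  ⟨X, by simp⟩

theorem adjoinElt_le {A B : Subalgebra k Λ} {z : Λ} (h : A ≤ B) (hz : z ∈ B) :
    A.adjoinElt z ≤ B := by
  rintro _ ⟨p, rfl⟩
  change aeval z p ∈ B
  rw [aeval_eq_sum_range]
  exact sum_mem fun i _ ↦ mul_mem (h (p.coeff i).2) (pow_mem hz i)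

end AdjoinElt

section CompleteIntersection

open Algebra

variable {k Λ : Type*} [Field k] [CommRing Λ] [Algebra k Λ] {A : Subalgebra k Λ}

theorem isCompleteIntersection_adjoinElt [IsDomain Λ]
    (hA : IsCompleteIntersectionOfFiniteType k A) {c F : A}
    (hc : c ≠ 0) (hF : ∀ b, c ∣ F * b → c ∣ b) {z : Λ} (hz : c * z = F) :
    IsCompleteIntersectionOfFiniteType k (A.adjoinElt z) := by
  have hdeg : (C c * X - C F : A[X]).degree = 1 := by
    rw [sub_eq_add_neg, ← C_neg]; exact degree_linear hc
  have h0 : (C c * X - C F : A[X]) ≠ 0 := by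
    intro h; rw [h] at hdeg; simp at hdeg
  have hu : ¬ IsUnit (C c * X - C F : A[X]) := by
    intro h; rw [degree_eq_zero_of_isUnit h] at hdeg; simp at hdeg
  have hker : RingHom.ker ((aeval z : A[X] →ₐ[A] Λ).restrictScalars k) =
      Ideal.span {C c * X - C F} := by
    refine le_antisymm (fun p hp ↦ ?_) ?_
    · rw [Ideal.mem_span_singleton]
      refine C_mul_X_sub_C_dvd_of_eval₂_eq_zero (g := algebraMap A Λ) (z := z)
        Subtype.val_injective hc hF hz ?_
      exact hp
    · rw [Ideal.span_singleton_le_iff_mem]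
      change aeval z (C c * X - C F) = 0
      simp only [map_sub, map_mul, aeval_C, aeval_X]
      exact sub_eq_zero.2 hz
  have h1 := hA.polynomial.quotient_span_singleton h0 hu
  exact h1.of_algEquiv ((Ideal.quotientEquivAlgOfEq k hker.symm).trans
    (Ideal.quotientKerEquivRange _))

theorem isCompleteIntersection_adjoinElt_of_transcendental
    (hA : IsCompleteIntersectionOfFiniteType k A) {z : Λ}
    (hz : Function.Injective (aeval z : A[X] →ₐ[A] Λ)) :
    IsCompleteIntersectionOfFiniteType k (A.adjoinElt z) :=
  hA.polynomial.of_algEquiv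
    (AlgEquiv.ofInjective ((aeval z : A[X] →ₐ[A] Λ).restrictScalars k) hz)

end CompleteIntersection

section Localization

variable {k Λ : Type*} [Field k] [CommRing Λ] [Algebra k Λ]

/-- `A'` is obtained from `A` by inverting some elements. -/
structure IsLocalizationOf (A' A : Subalgebra k Λ) : Prop where
  le : A ≤ A'
  exists_mul_mem : ∀ x ∈ A', ∃ b ∈ A, (∃ b' ∈ A', b * b' = 1) ∧ b * x ∈ A

theorem IsLocalizationOf.refl (A : Subalgebra k Λ) : A.IsLocalizationOf A :=
  ⟨le_rfl, fun x hx ↦ ⟨1, one_mem _, ⟨1, one_mem _, by simp⟩, by simpa⟩⟩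

theorem IsLocalizationOf.trans {A A' A'' : Subalgebra k Λ} (h' : A''.IsLocalizationOf A')
    (h : A'.IsLocalizationOf A) : A''.IsLocalizationOf A := by
  refine ⟨h.le.trans h'.le, fun x hx ↦ ?_⟩
  obtain ⟨b, hb, ⟨b', hb', hbb'⟩, hbx⟩ := h'.exists_mul_mem x hx
  obtain ⟨d, hd, ⟨d', hd', hdd'⟩, hdb⟩ := h.exists_mul_mem b hb
  obtain ⟨e, he, ⟨e', he', hee'⟩, hex⟩ := h.exists_mul_mem _ hbx
  refine ⟨e * (d * b), mul_mem he hdb, ⟨e' * (d' * b'),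
    mul_mem (h'.le he') (mul_mem (h'.le hd') hb'), ?_⟩, ?_⟩
  · linear_combination (d * d' * b * b') * hee' + (b * b') * hdd' + hbb'
  · convert mul_mem hd hex using 1
    ring

theorem isLocalizationOf_adjoinElt {A : Subalgebra k Λ} {b b' : Λ} (hb : b ∈ A)
    (hbb' : b * b' = 1) : (A.adjoinElt b').IsLocalizationOf A := by
  refine ⟨A.le_adjoinElt b', ?_⟩
  rintro _ ⟨p, rfl⟩
  refine ⟨b ^ p.natDegree, pow_mem hb _, ⟨b' ^ p.natDegree,
    pow_mem (A.self_mem_adjoinElt b') _, by rw [← mul_pow, hbb', one_pow]⟩, ?_⟩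
  change _ * aeval b' p ∈ A
  rw [aeval_eq_sum_range, Finset.mul_sum]
  refine sum_mem fun i hi ↦ ?_
  have hi : i ≤ p.natDegree := by simpa [Nat.lt_succ_iff] using hi
  have h1 : b ^ p.natDegree * p.coeff i • b' ^ i =
      b ^ (p.natDegree - i) * (p.coeff i : Λ) := by
    rw [Algebra.smul_def, Subalgebra.algebraMap_eq]
    change _ * ((p.coeff i : Λ) * _) = _
    obtain ⟨m, hm⟩ := Nat.exists_eq_add_of_le hi
    rw [hm, Nat.add_sub_cancel_left, pow_add]
    calc _ = (b * b') ^ i * (b ^ m * (p.coeff i : Λ)) := by ring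
      _ = _ := by rw [hbb', one_pow, one_mul]
  rw [h1]
  exact mul_mem (pow_mem hb _) (p.coeff i).2

end Localization

section LocalModel

open Algebra

variable {k Λ M : Type*} [Field k] [CommRing Λ] [Algebra k Λ]
  [LinearOrderedCommGroupWithZero M]

/-- The localization of a subalgebra `A` at the elements of valuation `1`. -/
def valLoc (v : Valuation Λ M) (A : Subalgebra k Λ) : Subalgebra k Λ where
  carrier := {x | ∃ b ∈ A, v b = 1 ∧ b * x ∈ A}
  mul_mem' := by
    rintro x y ⟨b, hb, hvb, hbx⟩ ⟨d, hd, hvd, hdy⟩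
    refine ⟨b * d, mul_mem hb hd, by simp [hvb, hvd], ?_⟩
    convert mul_mem hbx hdy using 1
    ring
  add_mem' := by
    rintro x y ⟨b, hb, hvb, hbx⟩ ⟨d, hd, hvd, hdy⟩
    refine ⟨b * d, mul_mem hb hd, by simp [hvb, hvd], ?_⟩
    convert add_mem (mul_mem hd hbx) (mul_mem hb hdy) using 1
    ring
  algebraMap_mem' := fun r ↦ ⟨1, one_mem _, map_one v, by simp⟩

theorem le_valLoc (v : Valuation Λ M) (A : Subalgebra k Λ) : A ≤ A.valLoc v :=
  fun x hx ↦ ⟨1, one_mem _, map_one v, by simpa⟩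

/-- `A` is a complete intersection subalgebra whose localization at the elements of
valuation `1` is `O`. -/
structure IsModel (v : Valuation Λ M) (O A : Subalgebra k Λ) : Prop where
  le : A ≤ O
  isCompleteIntersection : IsCompleteIntersectionOfFiniteType k A
  le_valLoc : O ≤ A.valLoc v

/-- `O` is a local ring dominated by the valuation `v`, and is a localization of a complete
intersection `k`-algebra of finite type. -/
structure IsLocalCI (v : Valuation Λ M) (O : Subalgebra k Λ) : Prop where
  le_one : ∀ a ∈ O, v a ≤ 1
  exists_inv : ∀ a ∈ O, v a = 1 → ∃ b ∈ O, a * b = 1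
  exists_isModel : ∃ A, O.IsModel v A

variable {v : Valuation Λ M} {O A : Subalgebra k Λ}

theorem isLocalCI_valLoc (hv : ∀ a, v a ≠ 0 → IsUnit a) (hA : ∀ a ∈ A, v a ≤ 1)
    (h : IsCompleteIntersectionOfFiniteType k A) : (A.valLoc v).IsLocalCI v := by
  refine ⟨?_, ?_, A, A.le_valLoc v, h, le_rfl⟩
  · rintro a ⟨b, hb, hvb, hba⟩
    simpa [hvb] using hA _ hba
  · rintro a ⟨b, hb, hvb, hba⟩ hva
    obtain ⟨a', haa'⟩ := (hv a (by simp [hva])).exists_right_inv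
    refine ⟨a', ⟨b * a, hba, by simp [hva, hvb], ?_⟩, haa'⟩
    rwa [mul_assoc, haa', mul_one]

theorem IsLocalCI.isUnit_iff (hO : O.IsLocalCI v) (a : O) : IsUnit a ↔ v a = 1 := by
  constructor
  · intro h
    obtain ⟨b, hb⟩ := h.exists_right_inv
    have h1 : v a * v b = 1 := by rw [← map_mul, ← MulMemClass.coe_mul, hb]; simp
    refine le_antisymm (hO.le_one _ a.2) ?_
    rw [← h1]
    exact mul_le_of_le_one_right' (hO.le_one _ b.2)
  · intro h
    obtain ⟨b, hb, hab⟩ := hO.exists_inv _ a.2 h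
    exact IsUnit.of_mul_eq_one ⟨b, hb⟩ (Subtype.ext hab)

theorem IsLocalCI.isLocalRing (hO : O.IsLocalCI v) : IsLocalRing O := by
  have : Nontrivial O := by
    refine ⟨0, 1, fun h ↦ ?_⟩
    have := congrArg (fun x : O ↦ v x) h
    simp at this
  refine IsLocalRing.of_nonunits_add fun a b ha hb ↦ ?_
  rw [mem_nonunits_iff, hO.isUnit_iff] at *
  have h1 := lt_of_le_of_ne (hO.le_one _ a.2) ha
  have h2 := lt_of_le_of_ne (hO.le_one _ b.2) hb
  exact (v.map_add_lt h1 h2).ne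

theorem IsLocalCI.isLocalHom_inclusion {O' : Subalgebra k Λ} (hO : O.IsLocalCI v)
    (hO' : O'.IsLocalCI v) (h : O ≤ O') : IsLocalHom (inclusion h).toRingHom := by
  refine ⟨fun a ha ↦ ?_⟩
  rw [hO.isUnit_iff]
  exact (hO'.isUnit_iff _).1 ha

theorem IsLocalCI.isNoetherianRing (hO : O.IsLocalCI v) : IsNoetherianRing O := by
  obtain ⟨A, hA⟩ := hO.exists_isModel
  have := hA.isCompleteIntersection.finiteType
  have hN : IsNoetherianRing A := Algebra.FiniteType.isNoetherianRing k A
  rw [isNoetherianRing_iff_ideal_fg]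
  intro I
  have : I = (I.comap (inclusion hA.le).toRingHom).map (inclusion hA.le).toRingHom := by
    refine le_antisymm (fun x hx ↦ ?_) Ideal.map_comap_le
    obtain ⟨b, hb, hvb, hbx⟩ := hA.le_valLoc x.2
    have hu : IsUnit (inclusion hA.le ⟨b, hb⟩) := (hO.isUnit_iff _).2 hvb
    rw [← Ideal.unit_mul_mem_iff_mem _ hu]
    have h1 : inclusion hA.le ⟨b, hb⟩ * x = (inclusion hA.le).toRingHom ⟨b * x, hbx⟩ := rfl
    rw [h1]
    refine Ideal.mem_map_of_mem _ ?_
    rw [Ideal.mem_comap, ← h1]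
    exact Ideal.mul_mem_left _ _ hx
  rw [this]
  exact Ideal.FG.map ((isNoetherianRing_iff_ideal_fg _).1 hN _) _

theorem IsModel.exists_isLocalizationOf [IsDomain Λ] (hA : O.IsModel v A) (hO : O.IsLocalCI v)
    {D : Set Λ} (hD : D.Finite) (hDO : D ⊆ O) :
    ∃ A', O.IsModel v A' ∧ D ⊆ A' ∧ A'.IsLocalizationOf A := by
  induction D, hD using Set.Finite.induction_on with
  | empty => exact ⟨A, hA, Set.empty_subset _, .refl A⟩
  | @insert d D _ _ ih =>
    obtain ⟨A', hA', hDA', hloc⟩ := ih ((Set.subset_insert _ _).trans hDO)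
    obtain ⟨b, hb, hvb, hbd⟩ := hA'.le_valLoc (hDO (Set.mem_insert d D))
    obtain ⟨b', hb', hbb'⟩ := hO.exists_inv b (hA'.le hb) hvb
    have hle := A'.le_adjoinElt b'
    have hb0 : b ≠ 0 := by rintro rfl; simp at hbb'
    refine ⟨A'.adjoinElt b', ⟨adjoinElt_le hA'.le hb', ?_, fun x hx ↦ ?_⟩, ?_,
      (isLocalizationOf_adjoinElt hb hbb').trans hloc⟩
    · refine isCompleteIntersection_adjoinElt hA'.isCompleteIntersection (c := ⟨b, hb⟩) (F := 1)
        (fun h ↦ hb0 (congrArg Subtype.val h)) (by simp) hbb'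
    · obtain ⟨e, he, hve, hex⟩ := hA'.le_valLoc hx
      exact ⟨e, hle he, hve, hle hex⟩
    · rw [Set.insert_subset_iff]
      refine ⟨?_, hDA'.trans hle⟩
      have : d = b' * (b * d) := by rw [← mul_assoc, mul_comm b', hbb', one_mul]
      rw [this]
      exact mul_mem (A'.self_mem_adjoinElt b') (hle hbd)

/-- A finite subset of a localized complete intersection lies in a complete intersection. -/
theorem IsLocalCI.exists_isModel_of_finite [IsDomain Λ] (hO : O.IsLocalCI v) {D : Set Λ}
    (hD : D.Finite) (hDO : D ⊆ O) : ∃ A, O.IsModel v A ∧ D ⊆ A := by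
  obtain ⟨A, hA⟩ := hO.exists_isModel
  obtain ⟨A', hA', hD', -⟩ := hA.exists_isLocalizationOf hO hD hDO
  exact ⟨A', hA', hD'⟩

theorem IsModel.exists_smul (hA : O.IsModel v A) (z : Λ) (p : O[X]) :
    ∃ b ∈ A, v b = 1 ∧ b * aeval z p ∈ A.adjoinElt z := by
  induction p using Polynomial.induction_on' with
  | add p q hp hq =>
    obtain ⟨b, hb, hvb, hbx⟩ := hp
    obtain ⟨d, hd, hvd, hdy⟩ := hq
    refine ⟨b * d, mul_mem hb hd, by simp [hvb, hvd], ?_⟩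
    convert add_mem (mul_mem (A.le_adjoinElt z hd) hbx) (mul_mem (A.le_adjoinElt z hb) hdy) using 1
    rw [map_add]
    ring
  | monomial n a =>
    obtain ⟨b, hb, hvb, hbx⟩ := hA.le_valLoc a.2
    refine ⟨b, hb, hvb, ?_⟩
    rw [aeval_monomial, ← mul_assoc]
    exact mul_mem (A.le_adjoinElt z hbx) (pow_mem (A.self_mem_adjoinElt z) _)

theorem IsModel.valLoc_adjoinElt (hA : O.IsModel v A) (z : Λ) :
    (O.adjoinElt z).valLoc v = (A.adjoinElt z).valLoc v := by
  have hle : A.adjoinElt z ≤ O.adjoinElt z :=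
    adjoinElt_le (hA.le.trans (O.le_adjoinElt z)) (O.self_mem_adjoinElt z)
  refine le_antisymm ?_ ?_
  · rintro x ⟨_, ⟨q, rfl⟩, hvq, p, hp⟩
    change v (aeval z q) = 1 at hvq
    change aeval z p = aeval z q * x at hp
    obtain ⟨b, hb, hvb, hbq⟩ := hA.exists_smul z q
    obtain ⟨d, hd, hvd, hdp⟩ := hA.exists_smul z p
    refine ⟨d * (b * aeval z q), mul_mem (A.le_adjoinElt z hd) hbq,
      by simp [hvb, hvd, hvq], ?_⟩
    convert mul_mem (A.le_adjoinElt z hb) hdp using 1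
    rw [hp]
    ring
  · rintro x ⟨b, hb, hvb, hbx⟩
    exact ⟨b, hle hb, hvb, hle hbx⟩

theorem IsLocalCI.adjoinElt_le_one (hO : O.IsLocalCI v) {z : Λ} (hz : v z ≤ 1) :
    ∀ a ∈ O.adjoinElt z, v a ≤ 1 := by
  rintro _ ⟨p, rfl⟩
  change v (aeval z p) ≤ 1
  rw [aeval_eq_sum_range]
  refine v.map_sum_le fun i _ ↦ ?_
  rw [Algebra.smul_def, map_mul, map_pow]
  exact mul_le_one' (hO.le_one _ (p.coeff i).2) (pow_le_one' hz i)

theorem IsLocalCI.valLoc_adjoinElt [IsDomain Λ] (hv : ∀ a, v a ≠ 0 → IsUnit a)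
    (hO : O.IsLocalCI v) {c F : O} (hc : c ≠ 0) (hF : ∀ b, c ∣ F * b → c ∣ b) {z : Λ}
    (hz : c * z = F) (hvz : v z ≤ 1) :
    ((O.adjoinElt z).valLoc v).IsLocalCI v := by
  obtain ⟨A, hA, hcF⟩ := hO.exists_isModel_of_finite (D := {(c : Λ), (F : Λ)}) (by simp)
    (by simp [Set.insert_subset_iff])
  have hcA : (c : Λ) ∈ A := hcF (by simp)
  have hFA : (F : Λ) ∈ A := hcF (by simp)
  have := hA.isCompleteIntersection.finiteType
  have hN : IsNoetherianRing A := Algebra.FiniteType.isNoetherianRing k A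
  obtain ⟨G, hG⟩ := (isNoetherianRing_iff_ideal_fg A).1 hN
    ((Ideal.span {⟨c, hcA⟩}).colon {(⟨F, hFA⟩ : A)})
  have hdiv : ∀ g ∈ G, ∃ t : O, (c : Λ) * t = g := by
    intro g hg
    have h1 : g ∈ (Ideal.span {⟨c, hcA⟩}).colon {(⟨F, hFA⟩ : A)} :=
      hG ▸ Submodule.subset_span hg
    rw [Submodule.mem_colon_singleton, Ideal.mem_span_singleton] at h1
    obtain ⟨t, ht⟩ := h1
    have h2 : F * ⟨g, hA.le g.2⟩ = c * ⟨t, hA.le t.2⟩ := by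
      apply Subtype.ext
      have := congrArg Subtype.val ht
      rw [smul_eq_mul] at this
      simpa [mul_comm] using this
    obtain ⟨t', ht'⟩ := hF _ ⟨_, h2⟩
    exact ⟨t', (congrArg Subtype.val ht').symm⟩
  choose! t ht using hdiv
  obtain ⟨A', hA', htA', hloc⟩ := hA.exists_isLocalizationOf hO (D := (fun g ↦ (t g : Λ)) '' G)
    (G.finite_toSet.image _) (by rintro _ ⟨g, -, rfl⟩; exact (t g).2)
  have hspan : ∀ g ∈ (Ideal.span {⟨c, hcA⟩}).colon {(⟨F, hFA⟩ : A)},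
      (⟨c, hloc.le hcA⟩ : A') ∣ inclusion hloc.le g := by
    intro g hg
    rw [← hG] at hg
    induction hg using Submodule.span_induction with
    | mem g hg =>
      exact ⟨⟨t g, htA' ⟨g, hg, rfl⟩⟩, Subtype.ext (ht g hg).symm⟩
    | zero => simp
    | add x y _ _ hx hy => rw [map_add]; exact dvd_add hx hy
    | smul a x _ hx => rw [smul_eq_mul, map_mul]; exact hx.mul_left _
  rw [hA'.valLoc_adjoinElt]
  refine isLocalCI_valLoc hv
    (fun a ha ↦ hO.adjoinElt_le_one hvz a
      (adjoinElt_le (hA'.le.trans (O.le_adjoinElt z)) (O.self_mem_adjoinElt z) ha)) ?_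
  refine isCompleteIntersection_adjoinElt hA'.isCompleteIntersection (c := ⟨c, hloc.le hcA⟩)
    (F := ⟨F, hloc.le hFA⟩) (fun h ↦ hc (Subtype.ext (congrArg (fun a : A' ↦ (a : Λ)) h))) ?_ hz
  rintro b ⟨e, he⟩
  obtain ⟨β, hβ, ⟨β', hβ', hββ⟩, hβb⟩ := hloc.exists_mul_mem b b.2
  obtain ⟨ε, hε, ⟨ε', hε', hεε⟩, hεe⟩ := hloc.exists_mul_mem e e.2
  have he' : (F : Λ) * b = c * e := congrArg Subtype.val he
  have h1 := hspan ⟨ε * (β * b), mul_mem hε hβb⟩ (by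
    rw [Submodule.mem_colon_singleton, Ideal.mem_span_singleton]
    refine ⟨⟨β * (ε * e), mul_mem hβ hεe⟩, Subtype.ext ?_⟩
    change ε * (β * b) * (F : Λ) = c * (β * (ε * e))
    linear_combination (ε * β) * he')
  have h2 : b = ⟨β' * ε', mul_mem hβ' hε'⟩ * inclusion hloc.le ⟨ε * (β * b), mul_mem hε hβb⟩ := by
    apply Subtype.ext
    change (b : Λ) = β' * ε' * (ε * (β * b))
    linear_combination (-(b * ε * ε')) * hββ - b * hεε
  rw [h2]
  exact h1.mul_left _

theorem IsLocalCI.valLoc_adjoinElt_of_transcendental (hv : ∀ a, v a ≠ 0 → IsUnit a)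
    (hO : O.IsLocalCI v) {z : Λ} (hz : Function.Injective (aeval z : O[X] →ₐ[O] Λ))
    (hvz : v z ≤ 1) : ((O.adjoinElt z).valLoc v).IsLocalCI v := by
  obtain ⟨A, hA⟩ := hO.exists_isModel
  rw [hA.valLoc_adjoinElt]
  refine isLocalCI_valLoc hv
    (fun a ha ↦ hO.adjoinElt_le_one hvz a
      (adjoinElt_le (hA.le.trans (O.le_adjoinElt z)) (O.self_mem_adjoinElt z) ha)) ?_
  refine isCompleteIntersection_adjoinElt_of_transcendental hA.isCompleteIntersection ?_
  have h1 : (aeval z : A[X] → Λ) =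
      (aeval z : O[X] → Λ) ∘ Polynomial.map (inclusion hA.le).toRingHom := by
    ext p
    simp [aeval_def, eval₂_map]
    rfl
  rw [h1]
  exact hz.comp (Polynomial.map_injective _ (inclusion_injective hA.le))

/-- The inclusion of `O` in the localization of `O[z]` presents the latter. -/
theorem IsLocalCI.isLocalizedSimple {z : Λ}
    (hO' : ((O.adjoinElt z).valLoc v).IsLocalCI v) {ρ : O[X]} (hρ : aeval z ρ = 0)
    (hdvd : ∀ p : O[X], aeval z p = 0 → ρ ∣ p) :
    IsLocalizedSimple (inclusion ((O.le_adjoinElt z).trans (le_valLoc v _))).toRingHom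
      ⟨z, le_valLoc v _ (O.self_mem_adjoinElt z)⟩ ρ := by
  have key (p : O[X]) :
      ((p.eval₂ (inclusion ((O.le_adjoinElt z).trans (le_valLoc v _))).toRingHom
      ⟨z, le_valLoc v _ (O.self_mem_adjoinElt z)⟩ : (O.adjoinElt z).valLoc v) : Λ) = aeval z p := by
    rw [← Subalgebra.coe_val, ← RingHom.coe_coe, Polynomial.hom_eval₂]
    rfl
  refine ⟨fun x ↦ ?_, ?_, fun p hp ↦ ?_⟩
  · obtain ⟨_, ⟨q, rfl⟩, hvq, p, hp⟩ := x.2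
    refine ⟨p, q, ?_, ?_⟩
    · rw [hO'.isUnit_iff, key]
      exact hvq
    · apply Subtype.ext
      rw [MulMemClass.coe_mul, key, key]
      exact hp.symm
  · apply Subtype.ext
    rw [key, hρ]
    rfl
  · refine hdvd p ?_
    rw [← key, hp]
    rfl

section Map

variable {K : Type*} [CommRing K] [Algebra k K] {w : Valuation K M} {ψ : Λ →ₐ[k] K}

theorem IsLocalCI.map_of_isModel (hO : O.IsLocalCI v) (hψ : ∀ x, w (ψ x) = v x)
    (hA : O.IsModel v A) (h : IsCompleteIntersectionOfFiniteType k (A.map ψ)) :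
    (O.map ψ).IsLocalCI w := by
  refine ⟨?_, ?_, A.map ψ, Subalgebra.map_mono hA.le, h, ?_⟩
  · rintro _ ⟨a, ha, rfl⟩
    exact (hψ a).trans_le (hO.le_one a ha)
  · rintro _ ⟨a, ha, rfl⟩ h1
    obtain ⟨b, hb, hab⟩ := hO.exists_inv a ha ((hψ a).symm.trans h1)
    refine ⟨ψ b, ⟨b, hb, rfl⟩, ?_⟩
    change ψ a * ψ b = 1
    rw [← map_mul, hab, map_one]
  · rintro _ ⟨a, ha, rfl⟩
    obtain ⟨b, hb, hvb, hba⟩ := hA.le_valLoc ha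
    exact ⟨ψ b, ⟨b, hb, rfl⟩, (hψ b).trans hvb, b * a, hba, map_mul ψ b a⟩

theorem IsLocalCI.map_of_injective (hO : O.IsLocalCI v) (hψ : ∀ x, w (ψ x) = v x)
    (hinj : Function.Injective ψ) : (O.map ψ).IsLocalCI w := by
  obtain ⟨A, hA⟩ := hO.exists_isModel
  exact hO.map_of_isModel hψ hA
    (hA.isCompleteIntersection.of_algEquiv (A.equivMapOfInjective ψ hinj))

theorem IsLocalCI.map_of_ker_eq_span [IsDomain Λ] [Nontrivial K] (hO : O.IsLocalCI v)
    (hψ : ∀ x, w (ψ x) = v x) {F : O} (hF : F ≠ 0) (hψF : ψ F = 0)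
    (hker : ∀ x : O, ψ x = 0 → F ∣ x) : (O.map ψ).IsLocalCI w := by
  obtain ⟨A, hA, hFA⟩ := hO.exists_isModel_of_finite (D := {(F : Λ)}) (by simp) (by simp)
  rw [Set.singleton_subset_iff] at hFA
  have := hA.isCompleteIntersection.finiteType
  have hN : IsNoetherianRing A := Algebra.FiniteType.isNoetherianRing k A
  obtain ⟨G, hG⟩ := (isNoetherianRing_iff_ideal_fg A).1 hN (RingHom.ker (ψ.comp A.val))
  have hdiv : ∀ g ∈ G, ∃ t : O, (F : Λ) * t = g := by
    intro g hg
    have h1 : g ∈ RingHom.ker (ψ.comp A.val) := hG ▸ Submodule.subset_span hg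
    obtain ⟨t, ht⟩ := hker ⟨g, hA.le g.2⟩ h1
    exact ⟨t, (congrArg Subtype.val ht).symm⟩
  choose! t ht using hdiv
  obtain ⟨A', hA', htA', hloc⟩ := hA.exists_isLocalizationOf hO (D := (fun g ↦ (t g : Λ)) '' G)
    (G.finite_toSet.image _) (by rintro _ ⟨g, -, rfl⟩; exact (t g).2)
  have hspan : ∀ g ∈ RingHom.ker (ψ.comp A.val),
      (⟨F, hloc.le hFA⟩ : A') ∣ inclusion hloc.le g := by
    intro g hg
    rw [← hG] at hg
    induction hg using Submodule.span_induction with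
    | mem g hg =>
      exact ⟨⟨t g, htA' ⟨g, hg, rfl⟩⟩, Subtype.ext (ht g hg).symm⟩
    | zero => simp
    | add x y _ _ hx hy => rw [map_add]; exact dvd_add hx hy
    | smul a x _ hx => rw [smul_eq_mul, map_mul]; exact hx.mul_left _
  refine hO.map_of_isModel hψ hA' ?_
  have hkerA' : RingHom.ker (ψ.comp A'.val) = Ideal.span {⟨F, hloc.le hFA⟩} := by
    refine le_antisymm (fun x hx ↦ ?_) ?_
    · obtain ⟨β, hβ, ⟨β', hβ', hββ⟩, hβx⟩ := hloc.exists_mul_mem x x.2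
      have hx' : ψ x = 0 := hx
      have h1 := hspan ⟨β * x, hβx⟩ (by
        change ψ (β * x) = 0
        rw [map_mul, hx', mul_zero])
      have h2 : x = ⟨β', hβ'⟩ * inclusion hloc.le ⟨β * x, hβx⟩ := by
        apply Subtype.ext
        change (x : Λ) = β' * (β * x)
        linear_combination -x * hββ
      rw [Ideal.mem_span_singleton, h2]
      exact h1.mul_left _
    · rw [Ideal.span_singleton_le_iff_mem]
      exact hψF
  have hrange : (ψ.comp A'.val).range = A'.map ψ := by
    rw [AlgHom.range_comp, Subalgebra.range_val]
  have h1 := hA'.isCompleteIntersection.quotient_span_singleton (a := ⟨F, hloc.le hFA⟩)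
    (fun h ↦ hF (Subtype.ext (congrArg (fun a : A' ↦ (a : Λ)) h))) (fun h ↦ by
      have := h.map (ψ.comp A'.val)
      change IsUnit (ψ F) at this
      rw [hψF] at this
      exact not_isUnit_zero this)
  exact h1.of_algEquiv (((Ideal.quotientEquivAlgOfEq k hkerA'.symm).trans
    (Ideal.quotientKerEquivRange _)).trans (Subalgebra.equivOfEq _ _ hrange))

end Map

end LocalModel

end Subalgebra

namespace Subalgebra

section SimpleExtension

variable {k Λ M : Type*} [Field k] [CommRing Λ] [Algebra k Λ] [LinearOrderedCommGroupWithZero M]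
  {v : Valuation Λ M} {R O : Subalgebra k Λ}

/-- `F` is a nonzerodivisor on `O / J O` for every ideal `J` of `R`. -/
def IsRelativelyRegular (h : R ≤ O) (F : O) : Prop :=
  ∀ (J : Ideal R) (b : O),
    F * b ∈ J.map (inclusion h).toRingHom → b ∈ J.map (inclusion h).toRingHom

theorem le_valLoc_adjoinElt (v : Valuation Λ M) (O : Subalgebra k Λ) (z : Λ) :
    O ≤ (O.adjoinElt z).valLoc v :=
  (O.le_adjoinElt z).trans (le_valLoc v _)

theorem mem_valLoc_adjoinElt (v : Valuation Λ M) (O : Subalgebra k Λ) (z : Λ) :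
    z ∈ (O.adjoinElt z).valLoc v :=
  le_valLoc v _ (O.self_mem_adjoinElt z)

variable {z : Λ} {ρ : O[X]}

theorem colonFlat_valLoc_adjoinElt {h : R ≤ O} (hf : (inclusion h).toRingHom.ColonFlat)
    (hs : IsLocalizedSimple (inclusion (le_valLoc_adjoinElt v O z)).toRingHom
      ⟨z, mem_valLoc_adjoinElt v O z⟩ ρ)
    (hρ : ∀ (J : Ideal R) (s : O[X]), ρ * s ∈ (J.map (inclusion h).toRingHom).map C →
      ∃ s' ∈ (J.map (inclusion h).toRingHom).map C, ρ * s = ρ * s') :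
    (inclusion (h.trans (le_valLoc_adjoinElt v O z))).toRingHom.ColonFlat := by
  have h1 : (inclusion (h.trans (le_valLoc_adjoinElt v O z))).toRingHom =
    (inclusion (le_valLoc_adjoinElt v O z)).toRingHom.comp (inclusion h).toRingHom := rfl
  rw [h1]
  exact hs.colonFlat hf hρ

theorem isRelativelyRegular_valLoc_adjoinElt [IsLocalRing R] (hR : R.IsLocalCI v) {h : R ≤ O}
    (hO' : ((O.adjoinElt z).valLoc v).IsLocalCI v)
    (hf : (inclusion (h.trans (le_valLoc_adjoinElt v O z))).toRingHom.ColonFlat)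
    (hs : IsLocalizedSimple (inclusion (le_valLoc_adjoinElt v O z)).toRingHom
      ⟨z, mem_valLoc_adjoinElt v O z⟩ ρ)
    {I : Ideal O} (hI : ((IsLocalRing.maximalIdeal R).map (inclusion h).toRingHom).map C ⊔
      Ideal.span {ρ} = I.map C)
    {H : O[X]} {n : ℕ} (hH : IsUnit (H.coeff n)) {F : (O.adjoinElt z).valLoc v}
    (hF : (F : Λ) = aeval z H) :
    IsRelativelyRegular (h.trans (le_valLoc_adjoinElt v O z)) F := by
  have := hR.isNoetherianRing
  have := hO'.isNoetherianRing
  have := hO'.isLocalRing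
  have := hR.isLocalHom_inclusion hO' (h.trans (le_valLoc_adjoinElt v O z))
  refine hf.mem_map_of_mul_mem fun b hb ↦ ?_
  have hF' : F = H.eval₂ (inclusion (le_valLoc_adjoinElt v O z)).toRingHom
      ⟨z, mem_valLoc_adjoinElt v O z⟩ := by
    apply Subtype.ext
    rw [hF]
    exact (Polynomial.hom_eval₂ H (inclusion (le_valLoc_adjoinElt v O z)).toRingHom
      ((O.adjoinElt z).valLoc v).val.toRingHom ⟨z, mem_valLoc_adjoinElt v O z⟩).symm
  rw [hF'] at hb
  exact hs.mem_of_eval₂_mul_mem hI hH hb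

end SimpleExtension

section Base

variable (k L : Type*) {Λ M : Type*} [Field k] [Field L] [CommRing Λ] [Algebra k Λ] [Algebra L Λ]
  [LinearOrderedCommGroupWithZero M] (v : Valuation Λ M)

/-- The filter of localized complete intersections inside `L` which contain
more and more elements of the valuation ring of `L`. -/
def baseFilter : Filter (Subalgebra k Λ) where
  sets := {T | ∃ W : Set L, W.Finite ∧ (∀ w ∈ W, v (algebraMap L Λ w) ≤ 1) ∧
    ∀ R : Subalgebra k Λ, R.IsLocalCI v → (R : Set Λ) ⊆ Set.range (algebraMap L Λ) →
      algebraMap L Λ '' W ⊆ R → R ∈ T}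
  univ_sets := ⟨∅, by simp⟩
  sets_of_superset := by
    rintro T T' ⟨W, hW, hW1, h⟩ hT
    exact ⟨W, hW, hW1, fun R h1 h2 h3 ↦ hT (h R h1 h2 h3)⟩
  inter_sets := by
    rintro T T' ⟨W, hW, hW1, h⟩ ⟨W', hW', hW1', h'⟩
    refine ⟨W ∪ W', hW.union hW', fun w hw ↦ hw.elim (hW1 w) (hW1' w), fun R h1 h2 h3 ↦ ?_⟩
    rw [Set.image_union, Set.union_subset_iff] at h3
    exact ⟨h R h1 h2 h3.1, h' R h1 h2 h3.2⟩

variable {L v}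

theorem eventually_mem_baseFilter {w : L} (hw : v (algebraMap L Λ w) ≤ 1) :
    ∀ᶠ R in baseFilter k L v, algebraMap L Λ w ∈ R :=
  ⟨{w}, by simp, by simpa, fun R _ _ h ↦ by simpa using h⟩

variable (L v)

theorem eventually_isLocalCI_baseFilter : ∀ᶠ R in baseFilter k L v, R.IsLocalCI v :=
  ⟨∅, by simp, by simp, fun _ h _ _ ↦ h⟩

theorem eventually_subset_range_baseFilter :
    ∀ᶠ R : Subalgebra k Λ in baseFilter k L v, (R : Set Λ) ⊆ Set.range (algebraMap L Λ) :=
  ⟨∅, by simp, by simp, fun _ _ h _ ↦ h⟩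

end Base

section ValFrac

variable {k Λ M : Type*} [Field k] [CommRing Λ] [Algebra k Λ] [LinearOrderedCommGroupWithZero M]

/-- The localization of a subalgebra `A` at the elements of nonzero valuation. -/
def valFrac (v : Valuation Λ M) (A : Subalgebra k Λ) : Subalgebra k Λ where
  carrier := {x | ∃ b ∈ A, v b ≠ 0 ∧ b * x ∈ A}
  mul_mem' := by
    rintro x y ⟨b, hb, hvb, hbx⟩ ⟨d, hd, hvd, hdy⟩
    refine ⟨b * d, mul_mem hb hd, by simp [hvb, hvd], ?_⟩
    convert mul_mem hbx hdy using 1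
    ring
  add_mem' := by
    rintro x y ⟨b, hb, hvb, hbx⟩ ⟨d, hd, hvd, hdy⟩
    refine ⟨b * d, mul_mem hb hd, by simp [hvb, hvd], ?_⟩
    convert add_mem (mul_mem hd hbx) (mul_mem hb hdy) using 1
    ring
  algebraMap_mem' := fun r ↦ ⟨1, one_mem _, by simp, by simp⟩

theorem le_valFrac (v : Valuation Λ M) (A : Subalgebra k Λ) : A ≤ A.valFrac v :=
  fun x hx ↦ ⟨1, one_mem _, by simp, by simpa⟩

theorem mem_valFrac_of_mul_mem {v : Valuation Λ M} {A : Subalgebra k Λ} {b x : Λ}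
    (hb : b ∈ A.valFrac v) (hvb : v b ≠ 0) (hbx : b * x ∈ A.valFrac v) : x ∈ A.valFrac v := by
  obtain ⟨d, hd, hvd, hdb⟩ := hb
  obtain ⟨e, he, hve, hebx⟩ := hbx
  refine ⟨e * (d * b), mul_mem he hdb, by simp [*], ?_⟩
  convert mul_mem hd hebx using 1
  ring

theorem valLoc_adjoinElt_le_valFrac {v : Valuation Λ M} {A O : Subalgebra k Λ} {z : Λ}
    (hO : O ≤ A.valFrac v) (hz : z ∈ A.valFrac v) : (O.adjoinElt z).valLoc v ≤ A.valFrac v := by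
  have h1 := adjoinElt_le hO hz
  rintro x ⟨b, hb, hvb, hbx⟩
  exact mem_valFrac_of_mul_mem (h1 hb) (by simp [hvb]) (h1 hbx)

end ValFrac

section Expand

variable {k L Λ M : Type*} [Field k] [Field L] [CommRing Λ] [Algebra k Λ] [Algebra L Λ]
  [LinearOrderedCommGroupWithZero M] (v : Valuation Λ M) (σ : M →*₀ L) (Y : Λ)

/-- The value of `f` at `Y` is a monomial times an element of `O`. -/
def Handles (O : Subalgebra k Λ) (f : L[X]) : Prop :=
  ∃ u ∈ O, aeval Y f = algebraMap L Λ (σ (v (aeval Y f))) * u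

variable {v σ Y}

theorem Handles.mono {O O' : Subalgebra k Λ} {f : L[X]} (h : O.Handles v σ Y f) (hO : O ≤ O') :
    O'.Handles v σ Y f :=
  let ⟨u, hu, h⟩ := h
  ⟨u, hO hu, h⟩

theorem algebraMap_section_div_mul (γ δ : M) (hδ : δ ≠ 0) :
    algebraMap L Λ (σ δ) * algebraMap L Λ (σ (γ / δ)) = algebraMap L Λ (σ γ) := by
  rw [← map_mul, ← map_mul, mul_div_cancel₀ _ hδ]

variable (k) in
theorem eventually_section_mem (hσ : ∀ γ, v (algebraMap L Λ (σ γ)) = γ) {γ δ : M} (h : γ ≤ δ)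
    (hδ : δ ≠ 0) : ∀ᶠ R in baseFilter k L v, algebraMap L Λ (σ (γ / δ)) ∈ R :=
  eventually_mem_baseFilter k (by rw [hσ]; exact (div_le_one₀ (zero_lt_iff.2 hδ)).2 h)

variable (k) in
theorem eventually_handles_C (hσ : ∀ γ, v (algebraMap L Λ (σ γ)) = γ) (a : L) :
    ∀ᶠ R in baseFilter k L v, ∀ O, R ≤ O → O.Handles v σ Y (C a) := by
  by_cases h0 : v (algebraMap L Λ a) = 0
  · have ha : a = 0 := by
      by_contra ha
      exact (v.comap (algebraMap L Λ)).ne_zero_iff.2 ha h0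
    exact .of_forall fun R O _ ↦ ⟨0, zero_mem _, by simp [ha]⟩
  have h1 : σ (v (algebraMap L Λ a)) ≠ 0 := by simpa using h0
  have h2 : v (algebraMap L Λ (a / σ (v (algebraMap L Λ a)))) ≤ 1 := by
    change v.comap (algebraMap L Λ) _ ≤ 1
    rw [map_div₀, Valuation.comap_apply, Valuation.comap_apply, hσ, div_self h0]
  filter_upwards [eventually_mem_baseFilter k h2] with R hR O hO
  refine ⟨_, hO hR, ?_⟩
  rw [aeval_C, ← map_mul, mul_div_cancel₀ _ h1]

theorem eventually_handles_C_mul (hσ : ∀ γ, v (algebraMap L Λ (σ γ)) = γ) (a : L) (f : L[X]) :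
    ∀ᶠ R in baseFilter k L v, ∀ O, R ≤ O → O.Handles v σ Y f → O.Handles v σ Y (C a * f) := by
  filter_upwards [eventually_handles_C k (Y := Y) hσ a] with R hR O hO ⟨u, hu, hf⟩
  obtain ⟨u', hu', ha⟩ := hR O hO
  refine ⟨u' * u, mul_mem hu' hu, ?_⟩
  rw [map_mul, map_mul, map_mul, map_mul]
  conv_lhs => rw [ha, hf]
  ring

theorem eventually_handles_add (hσ : ∀ γ, v (algebraMap L Λ (σ γ)) = γ) {f g : L[X]}
    (hf : v (aeval Y f) ≤ v (aeval Y (f + g))) (hg : v (aeval Y g) ≤ v (aeval Y (f + g))) :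
    ∀ᶠ R in baseFilter k L v, ∀ O, R ≤ O → O.Handles v σ Y f → O.Handles v σ Y g →
      O.Handles v σ Y (f + g) := by
  by_cases h0 : v (aeval Y (f + g)) = 0
  · refine .of_forall fun R O _ ⟨u, hu, h1⟩ ⟨w, hw, h2⟩ ↦ ⟨0, zero_mem _, ?_⟩
    rw [h0, le_zero_iff] at hf hg
    rw [hf] at h1
    rw [hg] at h2
    simp [h1, h2]
  filter_upwards [eventually_section_mem k hσ hf h0, eventually_section_mem k hσ hg h0]
    with R h1 h2 O hO ⟨u, hu, hu'⟩ ⟨w, hw, hw'⟩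
  refine ⟨_, add_mem (mul_mem (hO h1) hu) (mul_mem (hO h2) hw), ?_⟩
  rw [mul_add, ← mul_assoc, ← mul_assoc, algebraMap_section_div_mul _ _ h0,
    algebraMap_section_div_mul _ _ h0, ← hu', ← hw', map_add]

/-- If the coefficients of an expansion of `g` in powers of `Q` are handled by `O` then `g` is
a monomial times a polynomial in `q` having a unit coefficient. -/
theorem exists_expansion (hσ : ∀ γ, v (algebraMap L Λ (σ γ)) = γ) {E : L[X][X]} (hE : E ≠ 0)
    (hEv : ∀ j, E.coeff j ≠ 0 → v (aeval Y (E.coeff j)) ≠ 0) {Q : L[X]} {ε : M} (hε : ε ≠ 0) :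
    ∃ δ : M, δ ≠ 0 ∧ ∀ᶠ R in baseFilter k L v, ∀ O : Subalgebra k Λ, R ≤ O → O.IsLocalCI v →
      (∀ j, O.Handles v σ Y (E.coeff j)) → ∃ H : O[X], (∃ j, IsUnit (H.coeff j)) ∧
      ∀ q, aeval Y Q = algebraMap L Λ (σ ε) * q →
        aeval Y (E.eval Q) = algebraMap L Λ (σ δ) * aeval q H := by
  obtain ⟨J, hJ, hmax⟩ := E.support.exists_max_image (fun j ↦ v (aeval Y (E.coeff j)) * ε ^ j)
    (by simpa using hE)
  set δ := v (aeval Y (E.coeff J)) * ε ^ J with hδ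
  have hJv := hEv J (by simpa using hJ)
  have hδ0 : δ ≠ 0 := mul_ne_zero hJv (pow_ne_zero _ hε)
  refine ⟨δ, hδ0, ?_⟩
  clear_value δ
  have hev : ∀ᶠ R in baseFilter k L v, ∀ j ∈ E.support,
      algebraMap L Λ (σ (v (aeval Y (E.coeff j)) * ε ^ j / δ)) ∈ R :=
    (Filter.eventually_all_finset _).2 fun j hj ↦ eventually_section_mem k hσ (hmax j hj) hδ0
  filter_upwards [hev] with R hR O hRO hO hEO
  choose u hu huE using hEO
  classical
  set w : ℕ → O := fun j ↦ if hj : j ∈ E.support then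
    ⟨algebraMap L Λ (σ (v (aeval Y (E.coeff j)) * ε ^ j / δ)) * u j,
      mul_mem (hRO (hR j hj)) (hu j)⟩ else 0 with hw
  refine ⟨∑ j ∈ E.support, monomial j (w j), ⟨J, ?_⟩, fun q hq ↦ ?_⟩
  · rw [finsetSum_coeff]
    simp only [coeff_monomial]
    rw [Finset.sum_ite_eq' E.support J w, if_pos hJ, hO.isUnit_iff]
    simp only [hw, hJ, dif_pos]
    rw [← hδ, div_self hδ0]
    have := congrArg v (huE J)
    rw [map_mul, hσ] at this
    simpa using (mul_eq_left₀ hJv).1 this.symm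
  · rw [eval_eq_sum, Polynomial.sum, map_sum, map_sum, Finset.mul_sum]
    refine Finset.sum_congr rfl fun j hj ↦ ?_
    rw [aeval_monomial, map_mul, map_pow, hq, mul_pow]
    have h1 : algebraMap O Λ (w j) =
        algebraMap L Λ (σ (v (aeval Y (E.coeff j)) * ε ^ j / δ)) * u j := by
      simp only [hw, hj, dif_pos]
      rfl
    have h2 := algebraMap_section_div_mul (Λ := Λ) (σ := σ) (v (aeval Y (E.coeff j)) * ε ^ j) δ hδ0
    rw [map_mul σ (v _), map_mul, map_pow, map_pow] at h2
    rw [h1]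
    linear_combination (algebraMap L Λ (σ ε) ^ j * q ^ j) * huE j - (u j * q ^ j) * h2

end Expand

end Subalgebra

theorem Polynomial.exists_eval_eq_of_monic {L : Type*} [Field L] {Q : L[X]} (hQ : Q.Monic)
    (hQ0 : Q.natDegree ≠ 0) (g : L[X]) :
    ∃ E : L[X][X], (∀ j, (E.coeff j).degree < Q.degree) ∧ E.eval Q = g := by
  induction hn : g.natDegree using Nat.strong_induction_on generalizing g with
  | _ n ih =>
  have hQb : 0 < Q.degree := natDegree_pos_iff_degree_pos.1 (Nat.pos_of_ne_zero hQ0)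
  by_cases hlt : g.natDegree < Q.natDegree
  · refine ⟨C g, fun j ↦ ?_, by simp⟩
    rw [coeff_C]
    split_ifs
    · exact degree_lt_degree hlt
    · rw [degree_zero]; exact bot_lt_of_lt hQb
  · obtain ⟨E, hE, hEQ⟩ := ih (g /ₘ Q).natDegree (by
      rw [natDegree_divByMonic g hQ]; omega) _ rfl
    refine ⟨C (g %ₘ Q) + X * E, fun j ↦ ?_, ?_⟩
    · cases j with
      | zero => simpa using degree_modByMonic_lt g hQ
      | succ j => simpa [coeff_C] using hE j
    · rw [eval_add, eval_C, eval_mul, eval_X, hEQ, modByMonic_add_div]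

namespace Subalgebra

variable {k L Λ M : Type*} [Field k] [Field L] [CommRing Λ] [Algebra k Λ] [Algebra L Λ]
  [LinearOrderedCommGroupWithZero M]

theorem exists_ringHom_of_subset_range [Nontrivial Λ] {R : Subalgebra k Λ}
    (h : (R : Set Λ) ⊆ Set.range (algebraMap L Λ)) :
    ∃ ℓ : R →+* L, ∀ r : R, algebraMap L Λ (ℓ r) = r := by
  choose ℓ hℓ using fun r : R ↦ h r.2
  have hinj := (algebraMap L Λ).injective
  exact ⟨⟨⟨⟨ℓ, hinj (by simp [hℓ])⟩, fun a b ↦ hinj (by simp [hℓ])⟩, hinj (by simp [hℓ]),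
    fun a b ↦ hinj (by simp [hℓ])⟩, hℓ⟩

theorem aeval_map_eq {R : Subalgebra k Λ} {ℓ : R →+* L} (h : ∀ r : R, algebraMap L Λ (ℓ r) = r)
    (Y : Λ) (p : R[X]) : aeval Y (p.map ℓ) = aeval Y p := by
  rw [aeval_def, eval₂_map, aeval_def]
  congr 1
  ext r
  exact h r

variable (v : Valuation Λ M) (σ : M →*₀ L) (Y : Λ)

/-- A localized complete intersection `O` over `R`, flat over `R`, such that the polynomials of
`S`, evaluated at `Y`, are monomials times elements of `O`, and those of `G` are monomials times
relatively regular elements of `O`. -/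
structure IsAdapted (R O : Subalgebra k Λ) (S G : Set L[X]) (δ : L[X] → M) : Prop where
  le : R ≤ O
  mem : Y ∈ O
  isLocalCI : O.IsLocalCI v
  colonFlat : (inclusion le).toRingHom.ColonFlat
  le_valFrac : O ≤ (R.adjoinElt Y).valFrac v
  handles : ∀ f ∈ S, O.Handles v σ Y f
  regular : ∀ g ∈ G, ∃ F : O, aeval Y g = algebraMap L Λ (σ (δ g)) * F ∧
    IsRelativelyRegular le F

variable {v σ Y} {R O : Subalgebra k Λ} {S G : Set L[X]} {δ : L[X] → M}

theorem isAdapted_valLoc_adjoinElt {z : Λ} {ρ : O[X]} (hR : R.IsLocalCI v) (h : R ≤ O)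
    [IsLocalRing R] (hf : (inclusion h).toRingHom.ColonFlat)
    (hO' : ((O.adjoinElt z).valLoc v).IsLocalCI v)
    (hs : IsLocalizedSimple (inclusion (le_valLoc_adjoinElt v O z)).toRingHom
      ⟨z, mem_valLoc_adjoinElt v O z⟩ ρ)
    (hρ : ∀ (J : Ideal R) (s : O[X]), ρ * s ∈ (J.map (inclusion h).toRingHom).map C →
      ∃ s' ∈ (J.map (inclusion h).toRingHom).map C, ρ * s = ρ * s')
    {I : Ideal O} (hI : ((IsLocalRing.maximalIdeal R).map (inclusion h).toRingHom).map C ⊔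
      Ideal.span {ρ} = I.map C)
    (hY : Y ∈ (O.adjoinElt z).valLoc v)
    (hO : O ≤ (R.adjoinElt Y).valFrac v) (hz : z ∈ (R.adjoinElt Y).valFrac v)
    (hS : ∀ f ∈ S, ((O.adjoinElt z).valLoc v).Handles v σ Y f)
    (hG : ∀ g ∈ G, ∃ H : O[X], (∃ j, IsUnit (H.coeff j)) ∧
      aeval Y g = algebraMap L Λ (σ (δ g)) * aeval z H) :
    IsAdapted v σ Y R ((O.adjoinElt z).valLoc v) S G δ := by
  have hflat := colonFlat_valLoc_adjoinElt hf hs hρ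
  refine ⟨h.trans (le_valLoc_adjoinElt v O z), hY, hO', hflat, valLoc_adjoinElt_le_valFrac hO hz,
    hS, fun g hg ↦ ?_⟩
  obtain ⟨H, ⟨j, hj⟩, hgH⟩ := hG g hg
  exact ⟨⟨aeval z H, le_valLoc v _ ⟨H, rfl⟩⟩, hgH,
    isRelativelyRegular_valLoc_adjoinElt hR hO' hflat hs hI hj rfl⟩

theorem colonFlat_inclusion_refl (R : Subalgebra k Λ) :
    (inclusion (le_refl R)).toRingHom.ColonFlat := by
  have h : (inclusion (le_refl R)).toRingHom = RingHom.id R := rfl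
  rw [h]
  intro J a b hb
  rw [Ideal.map_id] at hb ⊢
  rw [Submodule.mem_colon_singleton, smul_eq_mul, mul_comm]
  exact hb

theorem exists_isAdapted_zero [IsDomain Λ] (hv : ∀ a, v a ≠ 0 → IsUnit a)
    (hσ : ∀ γ, v (algebraMap L Λ (σ γ)) = γ)
    (hinj : Function.Injective (aeval Y : L[X] →ₐ[L] Λ)) (hY : v Y ≤ 1)
    (hS : S.Finite) (hS0 : ∀ f ∈ S, f.natDegree = 0) (hG : G.Finite) (hG0 : ∀ g ∈ G, g ≠ 0) :
    ∃ δ : L[X] → M, (∀ g ∈ G, δ g ≠ 0) ∧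
      ∀ᶠ R in baseFilter k L v, ∃ O, IsAdapted v σ Y R O S G δ := by
  have hLv (a : L) (ha : a ≠ 0) : v (algebraMap L Λ a) ≠ 0 :=
    (v.comap (algebraMap L Λ)).ne_zero_iff.2 ha
  have hex (g : L[X]) (hg : g ∈ G) := exists_expansion (k := k) (Y := Y) (Q := X) (ε := 1) hσ
    (E := g.map C) ((Polynomial.map_ne_zero_iff C_injective).2 (hG0 g hg)) (by
      intro j hj
      rw [coeff_map, aeval_C]
      refine hLv _ fun h ↦ hj ?_
      rw [coeff_map, h, C_0]) one_ne_zero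
  choose! δ hδ0 hδ using hex
  refine ⟨δ, hδ0, ?_⟩
  have hev1 : ∀ᶠ R in baseFilter k L v, ∀ f ∈ S, ∀ O, R ≤ O → O.Handles v σ Y f := by
    refine (Filter.eventually_all_finite hS).2 fun f hf ↦ ?_
    rw [eq_C_of_natDegree_eq_zero (hS0 f hf)]
    exact eventually_handles_C k hσ _
  have hev2 : ∀ᶠ R in baseFilter k L v, ∀ g ∈ G, ∀ j, R.Handles v σ Y (C (g.coeff j)) := by
    refine (Filter.eventually_all_finite hG).2 fun g hg ↦ ?_
    have : ∀ᶠ R in baseFilter k L v, ∀ j ∈ g.support, R.Handles v σ Y (C (g.coeff j)) :=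
      (Filter.eventually_all_finset _).2 fun j _ ↦
        (eventually_handles_C k hσ _).mono fun R hR ↦ hR R le_rfl
    filter_upwards [this] with R hR j
    by_cases hj : j ∈ g.support
    · exact hR j hj
    · rw [notMem_support_iff.1 hj]
      exact ⟨0, zero_mem _, by simp⟩
  filter_upwards [hev1, hev2, (Filter.eventually_all_finite hG).2 hδ,
    eventually_isLocalCI_baseFilter k L v, eventually_subset_range_baseFilter k L v]
    with R hR1 hR2 hR3 hRloc hRrange
  have hinjR : Function.Injective (aeval Y : R[X] →ₐ[R] Λ) := by
    obtain ⟨ℓ, hℓ⟩ := exists_ringHom_of_subset_range hRrange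
    have h1 : (aeval Y : R[X] → Λ) = (aeval Y : L[X] → Λ) ∘ Polynomial.map ℓ :=
      funext fun p ↦ (aeval_map_eq hℓ Y p).symm
    rw [h1]
    refine hinj.comp (Polynomial.map_injective _ fun a b hab ↦ Subtype.ext ?_)
    rw [← hℓ, hab, hℓ]
  have := hRloc.isLocalRing
  have hO' := hRloc.valLoc_adjoinElt_of_transcendental hv hinjR hY
  refine ⟨(R.adjoinElt Y).valLoc v, isAdapted_valLoc_adjoinElt (ρ := 0) hRloc le_rfl
    (colonFlat_inclusion_refl R) hO' (hO'.isLocalizedSimple (by simp) fun p hp ↦ ?_)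
    (fun J s _ ↦ ⟨0, zero_mem _, by simp⟩)
    (I := (IsLocalRing.maximalIdeal R).map (inclusion le_rfl).toRingHom) (by simp)
    (mem_valLoc_adjoinElt v R Y) ((R.le_adjoinElt Y).trans (le_valFrac v _))
    (le_valFrac v _ (R.self_mem_adjoinElt Y))
    (fun f hf ↦ hR1 f hf _ (le_valLoc_adjoinElt v R Y)) fun g hg ↦ ?_⟩
  · rw [hinjR (hp.trans (map_zero _).symm)]
  · obtain ⟨H, hH, hHg⟩ := hR3 g hg R le_rfl hRloc (fun j ↦ by
      rw [coeff_map]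
      exact hR2 g hg j)
    refine ⟨H, hH, ?_⟩
    have := hHg Y (by simp)
    rwa [eval_map, eval₂_C_X] at this

/-- The key construction: adjoining the quotient of `Q(Y)` by the monomial of the same value. -/
theorem IsAdapted.adjoin [IsDomain Λ] (hv : ∀ a, v a ≠ 0 → IsUnit a)
    (hσ : ∀ γ, v (algebraMap L Λ (σ γ)) = γ) {Q : L[X]} (hQv : v (aeval Y Q) ≠ 0)
    (hQδ : v (aeval Y Q) < δ Q) (hR : R.IsLocalCI v)
    (hc : algebraMap L Λ (σ (v (aeval Y Q) / δ Q)) ∈ R)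
    {S' G' : Set L[X]} (hA : IsAdapted v σ Y R O S' G' δ) (hQ : Q ∈ G') {δ' : L[X] → M}
    (hS : ∀ O', O ≤ O' → O'.Handles v σ Y Q → ∀ f ∈ S, O'.Handles v σ Y f)
    (hG : ∀ g ∈ G, ∃ H : O[X], (∃ j, IsUnit (H.coeff j)) ∧
      ∀ q, aeval Y Q = algebraMap L Λ (σ (v (aeval Y Q))) * q →
      aeval Y g = algebraMap L Λ (σ (δ' g)) * aeval q H) :
    ∃ O', IsAdapted v σ Y R O' S G δ' := by
  have := hR.isLocalRing
  obtain ⟨F, hF, hreg⟩ := hA.regular Q hQ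
  have hδ0 : δ Q ≠ 0 := fun h ↦ by rw [h] at hQδ; exact not_lt_zero hQδ
  set γ := v (aeval Y Q) / δ Q with hγ
  have hγ0 : γ ≠ 0 := div_ne_zero hQv hδ0
  have hγ1 : γ < 1 := (div_lt_one₀ (zero_lt_iff.2 hδ0)).2 hQδ
  set c : R := ⟨algebraMap L Λ (σ γ), hc⟩ with hcdef
  have hσγ : σ γ ≠ 0 := by simpa using hγ0
  set z : Λ := algebraMap L Λ (σ γ)⁻¹ * F with hz
  have hcz : algebraMap L Λ (σ γ) * z = F := by
    rw [hz, ← mul_assoc, ← map_mul, mul_inv_cancel₀ hσγ, map_one, one_mul]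
  have hQz : aeval Y Q = algebraMap L Λ (σ (v (aeval Y Q))) * z := by
    rw [← algebraMap_section_div_mul (v (aeval Y Q)) _ hδ0, mul_assoc, hcz, ← hF]
  have hvz : v z = 1 := by
    have := congrArg v hQz
    rw [map_mul, hσ] at this
    exact (mul_eq_left₀ hQv).1 this.symm
  set f := (inclusion hA.le).toRingHom with hf
  have hcO : ((f c : O) : Λ) = algebraMap L Λ (σ γ) := rfl
  have hc0 : f c ≠ 0 := by
    intro h
    have h1 := congrArg (fun x : O ↦ v x) h
    simp only [hcO, hσ] at h1
    simp [hγ0] at h1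
  have hcm : c ∈ IsLocalRing.maximalIdeal R := by
    rw [IsLocalRing.mem_maximalIdeal, mem_nonunits_iff, hR.isUnit_iff]
    change v (algebraMap L Λ (σ γ)) ≠ 1
    rw [hσ]
    exact hγ1.ne
  have hFc : ∀ b, f c ∣ F * b → f c ∣ b := by
    intro b hb
    have := hreg (Ideal.span {c}) b
    rw [Ideal.map_span, Set.image_singleton, Ideal.mem_span_singleton,
      Ideal.mem_span_singleton] at this
    exact this hb
  have hO' := hA.isLocalCI.valLoc_adjoinElt hv hc0 hFc hcz hvz.le
  refine ⟨(O.adjoinElt z).valLoc v, isAdapted_valLoc_adjoinElt (ρ := C (f c) * X - C F) hR hA.le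
    hA.colonFlat hO' (hO'.isLocalizedSimple ?_ fun p hp ↦ ?_) (fun J s hs ↦ ⟨s, ?_, rfl⟩)
    (I := (IsLocalRing.maximalIdeal R).map f ⊔ Ideal.span {F}) ?_
    (le_valLoc_adjoinElt v O z hA.mem) hA.le_valFrac ?_ ?_ fun g hg ↦ ?_⟩
  · simp only [map_sub, map_mul, aeval_C, aeval_X]
    exact sub_eq_zero.2 hcz
  · exact C_mul_X_sub_C_dvd_of_eval₂_eq_zero (g := algebraMap O Λ) Subtype.val_injective hc0 hFc
      hcz hp
  · exact C_mul_X_sub_C_regular_mod (hreg J) hs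
  · rw [Ideal.map_sup, Ideal.map_span, Set.image_singleton]
    have hcX : C (f c) * X ∈ ((IsLocalRing.maximalIdeal R).map f).map (C : O →+* O[X]) :=
      Ideal.mul_mem_right _ _ (Ideal.mem_map_of_mem _ (Ideal.mem_map_of_mem _ hcm))
    refine le_antisymm (sup_le le_sup_left ?_) (sup_le le_sup_left ?_)
    · rw [Ideal.span_singleton_le_iff_mem]
      exact sub_mem (Ideal.mem_sup_left hcX)
        (Ideal.mem_sup_right (Ideal.mem_span_singleton_self _))
    · rw [Ideal.span_singleton_le_iff_mem]
      have := sub_mem (Ideal.mem_sup_left hcX)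
        (Ideal.mem_sup_right (Ideal.mem_span_singleton_self (C (f c) * X - C F)))
      rwa [sub_sub_cancel] at this
  · refine mem_valFrac_of_mul_mem (b := algebraMap L Λ (σ γ))
      (Subalgebra.le_valFrac v _ (R.le_adjoinElt Y hc)) (by rwa [hσ]) ?_
    rw [hcz]
    exact hA.le_valFrac F.2
  · exact hS _ (le_valLoc_adjoinElt v O z) ⟨z, mem_valLoc_adjoinElt v O z, hQz⟩
  · obtain ⟨H, hH, hHg⟩ := hG g hg
    exact ⟨H, hH, hHg z hQz⟩

theorem exists_isAdapted [IsDomain Λ] (hv : ∀ a, v a ≠ 0 → IsUnit a)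
    (hσ : ∀ γ, v (algebraMap L Λ (σ γ)) = γ)
    (hinj : Function.Injective (aeval Y : L[X] →ₐ[L] Λ)) (hY : v Y ≤ 1) (n : ℕ)
    (hn : ∀ f : L[X], f ≠ 0 → f.natDegree ≤ n → v (aeval Y f) ≠ 0)
    (hS : S.Finite) (hSn : ∀ f ∈ S, f.natDegree ≤ n) (hG : G.Finite) (hG0 : ∀ g ∈ G, g ≠ 0) :
    ∃ δ : L[X] → M, (∀ g ∈ G, δ g ≠ 0) ∧
      ∀ᶠ R in baseFilter k L v, ∃ O, IsAdapted v σ Y R O S G δ := by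
  induction n generalizing S G with
  | zero =>
    exact exists_isAdapted_zero hv hσ hinj hY hS (fun f hf ↦ Nat.le_zero.1 (hSn f hf)) hG hG0
  | succ n ih =>
  have ih' := fun {S G : Set L[X]} ↦ @ih S G fun f hf hfn ↦ hn f hf (hfn.trans n.le_succ)
  set T : Set L[X] := {f ∈ S | f.natDegree = n + 1} with hT
  have hTfin : T.Finite := hS.subset fun f hf ↦ hf.1
  obtain hT0 | hTne := T.eq_empty_or_nonempty
  · refine ih' hS (fun f hf ↦ Nat.le_of_lt_succ (lt_of_le_of_ne (hSn f hf) fun h ↦ ?_)) hG hG0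
    have : f ∈ T := ⟨hf, h⟩
    rw [hT0] at this
    exact this
  set nrm : L[X] → L[X] := fun f ↦ C f.leadingCoeff⁻¹ * f with hnrm
  have hnrmT : ∀ f ∈ T, (nrm f).Monic ∧ (nrm f).natDegree = n + 1 ∧
      C f.leadingCoeff * nrm f = f := by
    rintro f ⟨-, hf⟩
    have hf0 : f.leadingCoeff ≠ 0 := by
      rw [Ne, leadingCoeff_eq_zero]
      rintro rfl
      simp at hf
    refine ⟨?_, ?_, ?_⟩
    · rw [Monic, hnrm, leadingCoeff_mul, leadingCoeff_C, inv_mul_cancel₀ hf0]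
    · rw [hnrm, natDegree_C_mul (inv_ne_zero hf0), hf]
    · rw [hnrm, ← mul_assoc, ← C_mul, mul_inv_cancel₀ hf0, C_1, one_mul]
  obtain ⟨f₀, hf₀, hmin⟩ := Set.exists_min_image T (fun f ↦ v (aeval Y (nrm f))) hTfin hTne
  set Q := nrm f₀ with hQ
  obtain ⟨hQm, hQn, -⟩ := hnrmT f₀ hf₀
  rw [← hQ] at hQm hQn
  have hQv : v (aeval Y Q) ≠ 0 := hn Q hQm.ne_zero hQn.le
  choose E hE hEQ using exists_eval_eq_of_monic hQm (by omega)
  have hlt : ∀ f : L[X], f.degree < Q.degree → f.natDegree ≤ n := by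
    intro f hf
    obtain rfl | hf0 := eq_or_ne f 0
    · simp
    · have := natDegree_lt_natDegree hf0 hf
      omega
  set S' : Set L[X] := {f ∈ S | f.natDegree ≤ n} ∪ ((fun f ↦ nrm f - Q) '' T ∪
    ⋃ g ∈ G, ((E g).coeffs : Set L[X])) with hS'
  have hS'fin : S'.Finite := (hS.subset fun f hf ↦ hf.1).union ((hTfin.image _).union
    (hG.biUnion fun g _ ↦ (E g).coeffs.finite_toSet))
  have hS'n : ∀ f ∈ S', f.natDegree ≤ n := by
    rintro f (hf | ⟨f, hf, rfl⟩ | hf)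
    · exact hf.2
    · obtain ⟨h1, h2, -⟩ := hnrmT f hf
      refine hlt _ ?_
      exact degree_sub_lt_right (by rw [degree_eq_natDegree h1.ne_zero,
        degree_eq_natDegree hQm.ne_zero, h2, hQn]) hQm.ne_zero (by rw [h1, hQm])
    · simp only [Set.mem_iUnion, Finset.mem_coe, mem_coeffs_iff] at hf
      obtain ⟨g, -, j, -, rfl⟩ := hf
      exact hlt _ (hE g j)
  have hcoeff : ∀ (O : Subalgebra k Λ), (∀ f ∈ S', O.Handles v σ Y f) → ∀ g ∈ G, ∀ j,
      O.Handles v σ Y ((E g).coeff j) := by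
    intro O hO g hg j
    by_cases hj : (E g).coeff j = 0
    · rw [hj]
      exact ⟨0, zero_mem _, by simp⟩
    · exact hO _ (Or.inr (Or.inr (Set.mem_biUnion hg (coeff_mem_coeffs hj))))
  have hSev : ∀ᶠ R in baseFilter k L v, ∀ f ∈ S, ∀ O, R ≤ O → O.Handles v σ Y Q →
      (∀ f ∈ S', O.Handles v σ Y f) → O.Handles v σ Y f := by
    refine (Filter.eventually_all_finite hS).2 fun f hf ↦ ?_
    by_cases hfn : f.natDegree ≤ n
    · exact .of_forall fun R O _ _ hO ↦ hO f (Or.inl ⟨hf, hfn⟩)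
    have hfT : f ∈ T := ⟨hf, le_antisymm (hSn f hf) (by omega)⟩
    have hsum : Q + (nrm f - Q) = nrm f := by ring
    have h1 : v (aeval Y Q) ≤ v (aeval Y (Q + (nrm f - Q))) := by
      rw [hsum]
      exact hmin f hfT
    have h2 : v (aeval Y (nrm f - Q)) ≤ v (aeval Y (Q + (nrm f - Q))) := by
      rw [hsum, map_sub]
      exact (v.map_sub _ _).trans (max_le le_rfl (hmin f hfT))
    filter_upwards [eventually_handles_add (k := k) hσ h1 h2,
      eventually_handles_C_mul (k := k) (Y := Y) hσ f.leadingCoeff (nrm f)]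
      with R hR1 hR2 O hO hOQ hOS
    have h3 := hR1 O hO hOQ (hOS _ (Or.inr (Or.inl ⟨f, hfT, rfl⟩)))
    rw [hsum] at h3
    have h4 := hR2 O hO h3
    rwa [(hnrmT f hfT).2.2] at h4
  obtain ⟨δ, hδ0, hδ⟩ := ih' (S := S') (G := insert Q G) hS'fin hS'n (hG.insert Q) (by
    rintro g (rfl | hg)
    exacts [hQm.ne_zero, hG0 g hg])
  have hQle : ∀ R O : Subalgebra k Λ, IsAdapted v σ Y R O S' (insert Q G) δ →
      v (aeval Y Q) ≤ δ Q := by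
    intro R O hA
    obtain ⟨F, hF, -⟩ := hA.regular Q (Set.mem_insert Q G)
    rw [hF, map_mul, hσ]
    exact mul_le_of_le_one_right' (hA.isLocalCI.le_one F F.2)
  obtain hlt' | heq | hgt := lt_trichotomy (v (aeval Y Q)) (δ Q)
  · have hex (g : L[X]) (hg : g ∈ G) := exists_expansion (k := k) (Y := Y) (Q := Q) hσ
      (E := E g) (fun h ↦ hG0 g hg (by rw [← hEQ g, h, eval_zero]))
      (fun j hj ↦ hn _ hj ((hlt _ (hE g j)).trans n.le_succ)) hQv
    choose! δ' hδ'0 hδ' using hex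
    refine ⟨δ', hδ'0, ?_⟩
    filter_upwards [hδ, hSev, (Filter.eventually_all_finite hG).2 hδ',
      eventually_isLocalCI_baseFilter k L v,
      eventually_section_mem k hσ hlt'.le (hδ0 Q (Set.mem_insert Q G))]
      with R ⟨O, hA⟩ hRS hRδ hR hc
    refine hA.adjoin hv hσ hQv hlt' hR hc (Set.mem_insert Q G) (fun O' hOO' hOQ f hf ↦
      hRS f hf O' (hA.le.trans hOO') hOQ fun f hf ↦ (hA.handles f hf).mono hOO') fun g hg ↦ ?_
    obtain ⟨H, hH, hHg⟩ := hRδ g hg O hA.le hA.isLocalCI (hcoeff O hA.handles g hg)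
    exact ⟨H, hH, fun q hq ↦ by rw [← hHg q hq, hEQ]⟩
  · refine ⟨δ, fun g hg ↦ hδ0 g (Set.mem_insert_of_mem _ hg), ?_⟩
    filter_upwards [hδ, hSev] with R ⟨O, hA⟩ hRS
    obtain ⟨F, hF, -⟩ := hA.regular Q (Set.mem_insert Q G)
    rw [← heq] at hF
    exact ⟨O, hA.le, hA.mem, hA.isLocalCI, hA.colonFlat, hA.le_valFrac,
      fun f hf ↦ hRS f hf O hA.le ⟨F, F.2, hF⟩ hA.handles,
      fun g hg ↦ hA.regular g (Set.mem_insert_of_mem _ hg)⟩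
  · refine ⟨δ, fun g hg ↦ hδ0 g (Set.mem_insert_of_mem _ hg), ?_⟩
    filter_upwards [hδ] with R ⟨O, hA⟩
    exact absurd (hQle R O hA) hgt.not_ge

end Subalgebra

theorem Polynomial.exists_bezout_of_dvd_of_not_dvd {R L : Type*} [CommRing R] [IsDomain R]
    [Field L] {ℓ : R →+* L} (hℓ : Function.Injective ℓ) {P : L[X]} (hirr : Irreducible P)
    (hcoeff : ∀ i, ∃ r s : R, s ≠ 0 ∧ P.coeff i * ℓ s = ℓ r) {γ : L}
    (hγ : ∃ r s : R, s ≠ 0 ∧ γ * ℓ s = ℓ r) {p h : R[X]} (hp : P ∣ p.map ℓ)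
    (hh : ¬ P ∣ h.map ℓ) :
    ∃ β : R, β ≠ 0 ∧ ∃ (T : L[X]) (e e' : R[X]),
      C γ * (C (ℓ β) - T * h.map ℓ) = e'.map ℓ * P ∧ C γ * (T * p.map ℓ) = e.map ℓ * P := by
  let E := FractionRing R
  let j : E →+* L := IsFractionRing.lift hℓ
  have hjR (r : R) : j (algebraMap R E r) = ℓ r := IsFractionRing.lift_algebraMap hℓ r
  clear_value j
  have hfrac : ∀ a : L, (∃ r s : R, s ≠ 0 ∧ a * ℓ s = ℓ r) → a ∈ Set.range j := by
    rintro a ⟨r, s, hs0, hrs⟩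
    refine ⟨algebraMap R E r / algebraMap R E s, ?_⟩
    rw [map_div₀, hjR, hjR, div_eq_iff ((map_ne_zero_iff ℓ hℓ).2 hs0), hrs]
  obtain ⟨P, rfl⟩ : ∃ PE : E[X], PE.map j = P :=
    (Polynomial.mem_lifts _).1 ((Polynomial.lifts_iff_coeff_lifts P).2
      fun i ↦ hfrac _ (hcoeff i))
  obtain ⟨c, rfl⟩ := hfrac γ hγ
  have hmap (q : R[X]) : q.map ℓ = (q.map (algebraMap R E)).map j := by
    rw [Polynomial.map_map]
    congr 1
    ext r
    exact (hjR r).symm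
  have hcop := hirr.coprime_iff_not_dvd.2 hh
  rw [hmap] at hp hcop
  rw [Polynomial.isCoprime_map] at hcop
  rw [Polynomial.map_dvd_map'] at hp
  obtain ⟨r, hr⟩ := hp
  obtain ⟨t', t, htt'⟩ := hcop
  obtain ⟨b, hb, hbe⟩ := IsLocalization.integerNormalization_spec (nonZeroDivisors R)
    (C c * t * r)
  obtain ⟨b', hb', hbe'⟩ := IsLocalization.integerNormalization_spec (nonZeroDivisors R)
    (C c * t')
  set e := IsLocalization.integerNormalization (nonZeroDivisors R) (C c * t * r)
  set e' := IsLocalization.integerNormalization (nonZeroDivisors R) (C c * t')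
  rw [Algebra.smul_def, Polynomial.algebraMap_apply] at hbe hbe'
  refine ⟨b * b', mul_ne_zero (nonZeroDivisors.ne_zero hb) (nonZeroDivisors.ne_zero hb'),
    (C (algebraMap R E (b * b')) * t).map j, C b' * e, C b * e', ?_, ?_⟩
  all_goals
    rw [hmap, hmap, ← Polynomial.map_mul]
    simp only [← hjR, ← Polynomial.map_C, ← Polynomial.map_mul, ← Polynomial.map_sub]
    congr 1
    simp only [Polynomial.map_mul, Polynomial.map_C, hbe, hbe', hr, map_mul]
  · linear_combination (-(C c * C (algebraMap R E b) * C (algebraMap R E b'))) * htt'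
  · ring

namespace Subalgebra

variable {k L Λ M : Type*} [Field k] [Field L] [CommRing Λ] [Algebra k Λ] [Algebra L Λ]
  [LinearOrderedCommGroupWithZero M] {v : Valuation Λ M} {σ : M →*₀ L} {Y : Λ}
  {R O : Subalgebra k Λ} {S G : Set L[X]} {δ : L[X] → M}

theorem eventually_exists_fraction (k : Type*) [Field k] [Algebra k Λ] (v : Valuation Λ M)
    (a : L) : ∀ᶠ R : Subalgebra k Λ in baseFilter k L v,
      ∃ r ∈ R, ∃ s ∈ R, s ≠ 0 ∧ algebraMap L Λ a * s = r := by
  have : Nontrivial Λ := ⟨0, 1, fun h ↦ by simpa using congrArg v h⟩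
  obtain h | h := le_total (v (algebraMap L Λ a)) 1
  · filter_upwards [eventually_mem_baseFilter k h] with R hR
    exact ⟨_, hR, 1, one_mem R, one_ne_zero, mul_one _⟩
  · have ha : a ≠ 0 := by
      rintro rfl
      simp at h
    have h' : v (algebraMap L Λ a⁻¹) ≤ 1 := by
      have := map_inv₀ (v.comap (algebraMap L Λ)) a
      simp only [Valuation.comap_apply] at this
      rw [this]
      exact inv_le_one_of_one_le₀ h
    filter_upwards [eventually_mem_baseFilter k h'] with R hR
    exact ⟨1, one_mem R, _, hR, by simpa using ha, by
      rw [← map_mul, mul_inv_cancel₀ ha, map_one]⟩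

/-- If `P` generates the kernel of `f ↦ v (f(Y))`, the elements of `O` of valuation zero are
the multiples of the relatively regular element attached to `P`. -/
theorem IsAdapted.dvd_of_valuation_eq_zero [IsDomain Λ] (hA : IsAdapted v σ Y R O S G δ)
    (hR : (R : Set Λ) ⊆ Set.range (algebraMap L Λ)) {P : L[X]} (hirr : Irreducible P)
    (hdvd : ∀ f : L[X], v (aeval Y f) = 0 ↔ P ∣ f)
    (hcoeff : ∀ i, ∃ r ∈ R, ∃ s ∈ R, s ≠ 0 ∧ algebraMap L Λ (P.coeff i) * s = r)
    {γ : L} (hγ0 : γ ≠ 0) (hγ : ∃ r ∈ R, ∃ s ∈ R, s ≠ 0 ∧ algebraMap L Λ γ * s = r)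
    {F : O} (hF : aeval Y P = algebraMap L Λ γ * F) (hreg : IsRelativelyRegular hA.le F)
    {b : O} (hb : v b = 0) : F ∣ b := by
  obtain ⟨ℓ, hℓ⟩ := exists_ringHom_of_subset_range hR
  have hℓinj : Function.Injective ℓ := fun a b hab ↦ Subtype.ext (by rw [← hℓ, hab, hℓ])
  have hfrac : ∀ a : L, (∃ r ∈ R, ∃ s ∈ R, s ≠ 0 ∧ algebraMap L Λ a * s = r) →
      ∃ r s : R, s ≠ 0 ∧ a * ℓ s = ℓ r := by
    rintro a ⟨r, hr, s, hs, hs0, hrs⟩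
    refine ⟨⟨r, hr⟩, ⟨s, hs⟩, fun h ↦ hs0 (congrArg (fun a : R ↦ (a : Λ)) h), ?_⟩
    apply (algebraMap L Λ).injective
    rw [map_mul, hℓ, hℓ, hrs]
  obtain ⟨_, ⟨h, rfl⟩, hvh, p, hp⟩ := hA.le_valFrac b.2
  change v (aeval Y h) ≠ 0 at hvh
  change aeval Y p = aeval Y h * b at hp
  obtain ⟨β, hβ, T, e, e', h1, h2⟩ := Polynomial.exists_bezout_of_dvd_of_not_dvd hℓinj hirr
    (fun i ↦ hfrac _ (hcoeff i)) (hfrac _ hγ) (p := p) (h := h)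
    (by rw [← hdvd, aeval_map_eq hℓ, hp, map_mul, hb, mul_zero])
    (by rwa [← hdvd, aeval_map_eq hℓ])
  replace h1 := congrArg (aeval Y) h1
  replace h2 := congrArg (aeval Y) h2
  simp only [map_mul, map_sub, aeval_C, aeval_map_eq hℓ, hF, hp, hℓ] at h1 h2
  have hγ0' : algebraMap L Λ γ ≠ 0 := by simpa using hγ0
  have haev (q : R[X]) : aeval Y q ∈ O := adjoinElt_le hA.le hA.mem ⟨q, rfl⟩
  set u : O := ⟨aeval Y e, haev e⟩ + ⟨aeval Y e', haev e'⟩ * b with hu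
  have key : (inclusion hA.le).toRingHom β * b = F * u := by
    apply Subtype.ext
    apply mul_left_cancel₀ hγ0'
    change algebraMap L Λ γ * (β * b) = algebraMap L Λ γ * (F * (aeval Y e + aeval Y e' * b))
    linear_combination (b : Λ) * h1 + h2
  have hu' := hreg (Ideal.span {β}) u
  rw [Ideal.map_span, Set.image_singleton, Ideal.mem_span_singleton,
    Ideal.mem_span_singleton] at hu'
  obtain ⟨u', hu''⟩ := hu' ⟨b, key.symm⟩
  have hβ' : (inclusion hA.le).toRingHom β ≠ 0 := by
    intro h
    exact hβ (Subtype.ext (congrArg (fun a : O ↦ (a : Λ)) h))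
  refine ⟨u', mul_left_cancel₀ hβ' ?_⟩
  rw [key, hu'']
  ring

end Subalgebra

namespace Subalgebra

/-- Every finite subset of the valuation ring of `v` lies in a localized complete
intersection. -/
def HasLocalCIs (k : Type*) {L M : Type*} [Field k] [Field L] [Algebra k L]
    [LinearOrderedCommGroupWithZero M] (v : Valuation L M) : Prop :=
  ∀ D : Set L, D.Finite → (∀ d ∈ D, v d ≤ 1) → ∃ O : Subalgebra k L, O.IsLocalCI v ∧ D ⊆ O

variable {k L Λ K M : Type*} [Field k] [Field L] [CommRing Λ] [Field K] [Algebra k L]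
  [Algebra k Λ] [Algebra L Λ] [IsScalarTower k L Λ] [LinearOrderedCommGroupWithZero M]

theorem HasLocalCIs.exists_of_eventually {v : Valuation Λ M}
    (h : HasLocalCIs k (v.comap (algebraMap L Λ))) {p : Subalgebra k Λ → Prop}
    (hp : ∀ᶠ R in baseFilter k L v, p R) : ∃ R, p R := by
  have : Nontrivial Λ := ⟨0, 1, fun h ↦ by simpa using congrArg v h⟩
  obtain ⟨W, hW, hW1, hWp⟩ := hp
  obtain ⟨O, hO, hWO⟩ := h W hW hW1
  refine ⟨_, hWp (O.map (IsScalarTower.toAlgHom k L Λ))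
    (hO.map_of_injective (fun x ↦ rfl) (algebraMap L Λ).injective) ?_ ?_⟩
  · rintro _ ⟨x, -, rfl⟩
    exact ⟨x, rfl⟩
  · exact Set.image_mono hWO

variable [Algebra L K] [Algebra k K] [IsScalarTower k L K] {w : Valuation K M} {σ : M →*₀ L}
  {Y : Λ}

theorem eventually_exists_isAdapted_subset_map [IsDomain Λ] {ψ : Λ →ₐ[L] K}
    (hv : ∀ a, ψ a ≠ 0 → IsUnit a) (hσ : ∀ γ, w (algebraMap L K (σ γ)) = γ)
    (hinj : Function.Injective (aeval Y : L[X] →ₐ[L] Λ)) (hY : w (ψ Y) ≤ 1) {n : ℕ}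
    (hn : ∀ f : L[X], f ≠ 0 → f.natDegree ≤ n → aeval (ψ Y) f ≠ 0) {G : Set L[X]} (hG : G.Finite)
    (hG0 : ∀ g ∈ G, g ≠ 0) {D : Set K} (hD : D.Finite) (hD1 : ∀ d ∈ D, w d ≤ 1)
    (hDY : ∀ d ∈ D, ∃ f g : L[X], f.natDegree ≤ n ∧ g.natDegree ≤ n ∧
      aeval (ψ Y) g ≠ 0 ∧ d * aeval (ψ Y) g = aeval (ψ Y) f) :
    ∃ (S : Set L[X]) (δ : L[X] → M), (∀ g ∈ G, δ g ≠ 0) ∧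
      ∀ᶠ R in baseFilter k L (w.comap ψ.toRingHom),
        ∃ O, IsAdapted (w.comap ψ.toRingHom) σ Y R O S G δ ∧
          D ⊆ O.map (ψ.restrictScalars k) := by
  choose! f g hf hg hg0 hfg using hDY
  set v := w.comap ψ.toRingHom with hvdef
  have hvψ (x : Λ) : v x = w (ψ x) := rfl
  have hv0 (x : Λ) : v x ≠ 0 ↔ ψ x ≠ 0 := w.ne_zero_iff
  have hσ' (γ) : v (algebraMap L Λ (σ γ)) = γ := by rw [hvψ, ψ.commutes, hσ]
  have haev (q : L[X]) : ψ (aeval Y q) = aeval (ψ Y) q := (aeval_algHom_apply ψ Y q).symm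
  obtain ⟨δ, hδ0, hδ⟩ := exists_isAdapted (k := k) (S := f '' D ∪ g '' D) (v := v)
    (fun a ha ↦ hv a ((hv0 a).1 ha)) hσ' hinj hY n
    (fun q hq hqn ↦ by rw [hv0, haev]; exact hn q hq hqn)
    ((hD.image f).union (hD.image g))
    (by
      rintro _ (⟨d, hd, rfl⟩ | ⟨d, hd, rfl⟩)
      exacts [hf d hd, hg d hd]) hG hG0
  refine ⟨f '' D ∪ g '' D, δ, hδ0, ?_⟩
  have hle (d) (hd : d ∈ D) : v (aeval Y (f d)) ≤ v (aeval Y (g d)) := by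
    rw [hvψ, hvψ, haev, haev, ← hfg d hd, map_mul]
    exact mul_le_of_le_one_left' (hD1 d hd)
  have hvg (d) (hd : d ∈ D) : v (aeval Y (g d)) ≠ 0 := by
    rw [hv0, haev]
    exact hg0 d hd
  filter_upwards [hδ, (Filter.eventually_all_finite hD).2 fun d hd ↦
    eventually_section_mem k hσ' (hle d hd) (hvg d hd)] with R ⟨O, hO⟩ hR
  refine ⟨O, hO, fun d hd ↦ ?_⟩
  obtain ⟨u, hu, hfu⟩ := hO.handles _ (Or.inl ⟨d, hd, rfl⟩)
  obtain ⟨t, ht, hgt⟩ := hO.handles _ (Or.inr ⟨d, hd, rfl⟩)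
  have hvt : v t = 1 := by
    have := congrArg v hgt
    rw [map_mul, hσ'] at this
    exact (mul_eq_left₀ (hvg d hd)).1 this.symm
  obtain ⟨t', ht', htt'⟩ := hO.isLocalCI.exists_inv t ht hvt
  refine ⟨_, mul_mem (hO.le (hR d hd)) (mul_mem hu ht'), ?_⟩
  change ψ _ = d
  apply mul_right_cancel₀ (hg0 d hd)
  rw [hfg d hd, ← haev, ← haev, ← map_mul]
  congr 1
  have hdiv := algebraMap_section_div_mul (L := L) (Λ := Λ) (σ := σ) (v (aeval Y (f d))) _
    (hvg d hd)
  set q := algebraMap L Λ (σ (v (aeval Y (f d)) / v (aeval Y (g d))))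
  linear_combination q * u * t' * hgt - hfu +
    q * u * algebraMap L Λ (σ (v (aeval Y (g d)))) * htt' + u * hdiv

/-- The extension step, in terms of a local domain `Λ` between `L[Y]` and `K`. -/
theorem HasLocalCIs.of_algHom [IsDomain Λ] (h : HasLocalCIs k (w.comap (algebraMap L K)))
    {ψ : Λ →ₐ[L] K}
    (hv : ∀ a, ψ a ≠ 0 → IsUnit a) (hσ : ∀ γ, w (algebraMap L K (σ γ)) = γ)
    (hinj : Function.Injective (aeval Y : L[X] →ₐ[L] Λ)) (hY : w (ψ Y) ≤ 1)
    (hψ : Transcendental L (ψ Y) → Function.Injective ψ)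
    (hK : ∀ d : K, ∃ f g : L[X], aeval (ψ Y) g ≠ 0 ∧ d * aeval (ψ Y) g = aeval (ψ Y) f) :
    HasLocalCIs k w := by
  intro D hD hD1
  set v := w.comap ψ.toRingHom with hvdef
  have hvψ (x : Λ) : w ((ψ.restrictScalars k) x) = v x := rfl
  have haev (q : L[X]) : ψ (aeval Y q) = aeval (ψ Y) q := (aeval_algHom_apply ψ Y q).symm
  have hL : HasLocalCIs k (v.comap (algebraMap L Λ)) := by
    have : v.comap (algebraMap L Λ) = w.comap (algebraMap L K) := by
      ext x
      simp [v]
    rwa [this]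
  by_cases hy : Transcendental L (ψ Y)
  · choose f g hg hfg using hK
    obtain ⟨n, hn⟩ := (hD.image fun d ↦ max (f d).natDegree (g d).natDegree).bddAbove
    have hmax (d) (hd : d ∈ D) : max (f d).natDegree (g d).natDegree ≤ n := hn ⟨d, hd, rfl⟩
    obtain ⟨S, δ, -, hev⟩ := eventually_exists_isAdapted_subset_map (k := k) hv hσ hinj hY
      (n := n) (fun q hq _ h0 ↦ hq ((transcendental_iff.1 hy) q h0)) Set.finite_empty
      (by simp) hD hD1
      (fun d hd ↦ ⟨f d, g d, le_of_max_le_left (hmax d hd), le_of_max_le_right (hmax d hd),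
        hg d, hfg d⟩)
    obtain ⟨R, O, hO, hDO⟩ := hL.exists_of_eventually hev
    exact ⟨_, hO.isLocalCI.map_of_injective hvψ (hψ hy), hDO⟩
  · rw [Transcendental, not_not] at hy
    have hx_int := hy.isIntegral
    set P := minpoly L (ψ Y) with hP
    have hPm : P.Monic := minpoly.monic hx_int
    have hPd : 0 < P.natDegree := minpoly.natDegree_pos hx_int
    have hdvd (q : L[X]) : v (aeval Y q) = 0 ↔ P ∣ q := by
      rw [minpoly.dvd_iff, ← haev]
      exact w.zero_iff
    obtain ⟨S, δ, hδ0, hev⟩ := eventually_exists_isAdapted_subset_map (k := k) hv hσ hinj hY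
      (n := P.natDegree - 1) (G := {P}) (fun q hq hqn h0 ↦ by
        have : P.natDegree ≤ q.natDegree := natDegree_le_of_dvd (minpoly.dvd L _ h0) hq
        omega) (Set.finite_singleton P) (by simpa using hPm.ne_zero) hD hD1
      (fun d hd ↦ by
        obtain ⟨f, g, hg, hfg⟩ := hK d
        have hcop : IsCoprime P g :=
          (minpoly.irreducible hx_int).coprime_iff_not_dvd.2 fun h ↦ hg ((minpoly.dvd_iff).1 h)
        obtain ⟨s, t, hst⟩ := hcop
        refine ⟨(f * t) %ₘ P, 1, ?_, by simp, by simp, ?_⟩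
        · have := natDegree_modByMonic_lt (f * t) hPm fun h ↦ by simp [h] at hPd
          omega
        · have h1 : aeval (ψ Y) (t * g) = 1 := by
            have := congrArg (aeval (ψ Y)) hst
            rwa [map_add, map_mul, hP, minpoly.aeval, mul_zero, zero_add, map_one] at this
          rw [aeval_modByMonic_eq_self_of_root (minpoly.aeval L (ψ Y))]
          rw [map_mul, ← hfg, map_one]
          rw [map_mul] at h1
          linear_combination -d * h1)
    have hδP : δ P ≠ 0 := hδ0 P rfl
    have hcoeff : ∀ᶠ R : Subalgebra k Λ in baseFilter k L v, ∀ i,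
        ∃ r ∈ R, ∃ s ∈ R, s ≠ 0 ∧ algebraMap L Λ (P.coeff i) * s = r := by
      have : ∀ᶠ R : Subalgebra k Λ in baseFilter k L v, ∀ i ∈ P.support,
          ∃ r ∈ R, ∃ s ∈ R, s ≠ 0 ∧ algebraMap L Λ (P.coeff i) * s = r :=
        (Filter.eventually_all_finset _).2 fun i _ ↦ eventually_exists_fraction k v _
      filter_upwards [this] with R hR i
      by_cases hi : i ∈ P.support
      · exact hR i hi
      · exact ⟨0, zero_mem R, 1, one_mem R, one_ne_zero, by simp [notMem_support_iff.1 hi]⟩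
    obtain ⟨R, ⟨O, hO, hDO⟩, hRc, hRδ, hRr⟩ := hL.exists_of_eventually
      (hev.and (hcoeff.and ((eventually_exists_fraction k v (σ (δ P))).and
        (eventually_subset_range_baseFilter k L v))))
    obtain ⟨F, hF, hreg⟩ := hO.regular P rfl
    have hPY : aeval Y P ≠ 0 := fun h ↦ hPm.ne_zero (hinj (h.trans (map_zero _).symm))
    have hψσ : ψ (algebraMap L Λ (σ (δ P))) ≠ 0 := by
      rw [ψ.commutes]
      simpa using hδP
    refine ⟨_, hO.isLocalCI.map_of_ker_eq_span hvψ (F := F) ?_ ?_ fun b hb ↦ ?_, hDO⟩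
    · rintro rfl
      exact hPY (by simpa using hF)
    · have := congrArg ψ hF
      rw [haev, minpoly.aeval, map_mul] at this
      exact (mul_eq_zero.1 this.symm).resolve_left hψσ
    · refine hO.dvd_of_valuation_eq_zero hRr (minpoly.irreducible hx_int) hdvd hRc
        (by simpa using hδP) hRδ hF hreg ?_
      rw [← hvψ, hb, map_zero]

/-- The extension step: adjoining one element of the valuation ring. -/
theorem HasLocalCIs.of_adjoin (h : HasLocalCIs k (w.comap (algebraMap L K)))
    (hσ : ∀ γ, w (algebraMap L K (σ γ)) = γ) {y : K} (hy : w y ≤ 1)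
    (hK : ∀ d : K, ∃ f g : L[X], aeval y g ≠ 0 ∧ d * aeval y g = aeval y f) :
    HasLocalCIs k w := by
  let P : Ideal L[X] := RingHom.ker (aeval y : L[X] →ₐ[L] K)
  have : P.IsPrime := RingHom.ker_isPrime _
  have hmem (q : L[X]) : q ∈ P ↔ aeval y q = 0 := Iff.rfl
  clear_value P
  have : IsDomain (Localization.AtPrime P) := inferInstance
  let ψ : Localization.AtPrime P →ₐ[L] K := IsLocalization.liftAlgHom (M := P.primeCompl)
    (f := aeval y) fun q ↦ isUnit_iff_ne_zero.2 fun h ↦ q.2 ((hmem _).2 h)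
  have hψ (q : L[X]) : ψ (algebraMap _ _ q) = aeval y q :=
    IsLocalization.lift_eq _ q
  have haev (q : L[X]) : aeval (algebraMap L[X] (Localization.AtPrime P) X) q =
      algebraMap _ _ q := by
    rw [aeval_algebraMap_apply, aeval_X_left_apply]
  have hY : ψ (algebraMap L[X] _ X) = y := by rw [hψ, aeval_X]
  have hmk (q : L[X]) (t : P.primeCompl) :
      ψ (IsLocalization.mk' (Localization.AtPrime P) q t) = 0 → q ∈ P := by
    intro h
    rw [hmem, ← hψ, ← IsLocalization.mk'_spec (Localization.AtPrime P) q t, map_mul, h, zero_mul]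
  refine HasLocalCIs.of_algHom (Λ := Localization.AtPrime P) (ψ := ψ) (σ := σ)
    (Y := algebraMap L[X] _ X) h (fun a ha ↦ ?_) hσ ?_ (by rwa [hY]) (fun ht ↦ ?_) (by rwa [hY])
  · obtain ⟨q, t, rfl⟩ := IsLocalization.exists_mk'_eq P.primeCompl a
    rw [IsLocalization.AtPrime.isUnit_mk'_iff (Localization.AtPrime P) P]
    intro hq
    apply ha
    have h1 := congrArg ψ (IsLocalization.mk'_spec (Localization.AtPrime P) q t)
    rw [map_mul, hψ, hψ, (hmem q).1 hq] at h1
    exact (mul_eq_zero.1 h1).resolve_right fun h ↦ t.2 ((hmem _).2 h)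
  · intro q q' hq
    rw [haev, haev] at hq
    exact IsLocalization.injective _ P.primeCompl_le_nonZeroDivisors hq
  · rw [hY] at ht
    rw [injective_iff_map_eq_zero]
    intro a ha
    obtain ⟨q, t, rfl⟩ := IsLocalization.exists_mk'_eq P.primeCompl a
    rw [transcendental_iff.1 ht q ((hmem q).1 (hmk q t ha)), IsLocalization.mk'_zero]

end Subalgebra

section Perron

open Finset Function

variable {ι Γ : Type*} [AddCommGroup Γ]

theorem Fintype.sum_update_add_smul_update_sub [Fintype ι] [DecidableEq ι] (a : ι → Γ)
    (c : ι → ℤ) {p q : ι} (hpq : p ≠ q) :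
    ∑ i, update c q (c q + c p) i • update a p (a p - a q) i = ∑ i, c i • a i := by
  have hq : q ∈ univ.erase p := by simp [hpq.symm]
  rw [← add_sum_erase univ _ (mem_univ p), ← add_sum_erase _ _ hq,
    ← add_sum_erase univ _ (mem_univ p), ← add_sum_erase _ _ hq]
  have hrest : ∀ i ∈ (univ.erase p).erase q,
      update c q (c q + c p) i • update a p (a p - a q) i = c i • a i := by
    intro i hi
    simp only [mem_erase, mem_univ, and_true] at hi
    rw [update_of_ne hi.1, update_of_ne hi.2]
  rw [Finset.sum_congr rfl hrest]
  simp only [update_self, update_of_ne hpq, update_of_ne hpq.symm, smul_sub, add_smul]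
  abel

theorem AddSubmonoid.range_subset_closure_range_update_sub [DecidableEq ι] (a : ι → Γ)
    {p q : ι} (hpq : p ≠ q) :
    Set.range a ⊆ closure (Set.range (update a p (a p - a q))) := by
  rintro _ ⟨i, rfl⟩
  have hmem (j : ι) (hj : j ≠ p) :
      a j ∈ closure (Set.range (update a p (a p - a q))) :=
    subset_closure ⟨j, update_of_ne hj _ _⟩
  obtain rfl | hi := eq_or_ne i p
  · have h : a i - a q ∈ closure (Set.range (update a i (a i - a q))) :=
      subset_closure ⟨i, update_self _ _ _⟩
    have := add_mem h (hmem q hpq.symm)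
    rwa [sub_add_cancel] at this
  · exact hmem i hi

variable [LinearOrder Γ] [IsOrderedAddMonoid Γ]

theorem exists_mul_neg_of_sum_smul_eq_zero [Fintype ι] {a : ι → Γ} (ha : ∀ i, 0 < a i) {c : ι → ℤ}
    (h : ∑ i, c i • a i = 0) {i : ι} (hi : c i ≠ 0) : ∃ j, c j * c i < 0 := by
  by_contra! hneg
  have h1 : ∑ j, (c j * c i) • a j = 0 := by
    simp only [mul_comm _ (c i), mul_smul, ← smul_sum, h, smul_zero]
  have h2 := (sum_eq_zero_iff_of_nonneg fun j _ ↦ zsmul_nonneg (ha j).le (hneg j)).1 h1 i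
    (mem_univ i)
  exact (zsmul_pos (ha i) (mul_self_pos.2 hi)).ne' h2

/-- Positive elements satisfying a nontrivial relation lie in the monoid generated by fewer
positive elements. -/
theorem exists_closure_image_compl_of_sum_smul_eq_zero [Fintype ι] [DecidableEq ι]
    (a : ι → Γ) (ha : ∀ i, 0 < a i)
    (c : ι → ℤ) (h : ∑ i, c i • a i = 0) (i : ι) (hi : c i ≠ 0) (hmax : ∀ j, |c j| ≤ |c i|) :
    ∃ (a' : ι → Γ) (j : ι), (∀ i, 0 < a' i) ∧
      Set.range a ⊆ AddSubmonoid.closure (a' '' {j}ᶜ) := by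
  obtain ⟨j, hj⟩ := exists_mul_neg_of_sum_smul_eq_zero ha h hi
  have hji : j ≠ i := by
    rintro rfl
    exact (mul_self_nonneg _).not_gt hj
  have hcj : c j ≠ 0 := by
    intro h
    simp [h] at hj
  have habs : |c j + c i| < |c i| := by
    have := hmax j
    obtain ⟨h1, h2⟩ | ⟨h1, h2⟩ := mul_neg_iff.1 hj
    · rw [abs_of_pos h1, abs_of_neg h2] at this
      rw [abs_of_neg h2, abs_lt]
      omega
    · rw [abs_of_neg h1, abs_of_pos h2] at this
      rw [abs_of_pos h2, abs_lt]
      omega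
  obtain hlt | heq | hlt := lt_trichotomy (a i) (a j)
  · -- subtract `a i` from `a j`
    set c' := update c i (c i + c j) with hc'
    have hc'le (l : ι) : |c' l| ≤ |c i| := by
      obtain rfl | hl := eq_or_ne l i
      · rw [hc', update_self, add_comm]
        exact habs.le
      · rw [hc', update_of_ne hl]
        exact hmax l
    have hc'j : c' j ≠ 0 := by rwa [hc', update_of_ne hji]
    obtain ⟨i', -, hi'⟩ := exists_max_image univ (fun l ↦ |c' l|) ⟨i, mem_univ i⟩
    have hi'0 : c' i' ≠ 0 := by
      rw [← abs_pos]
      exact (abs_pos.2 hc'j).trans_le (hi' j (mem_univ j))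
    have ha' (l : ι) : 0 < update a j (a j - a i) l := by
      obtain rfl | hl := eq_or_ne l j
      · simpa using hlt
      · simpa [update_of_ne hl] using ha l
    have hdec : Prod.Lex (· < ·) (Prod.Lex (· < ·) (· < ·))
        ((c' i').natAbs, #{l | |c' l| = |c' i'|}, #{l | c' l * c' i' < 0})
        ((c i).natAbs, #{l | |c l| = |c i|}, #{l | c l * c i < 0}) := by
      obtain h1 | h1 := (hc'le i').lt_or_eq
      · exact Prod.Lex.left _ _ (by zify; exact h1)
      · have h1' : (c' i').natAbs = (c i).natAbs := by
          zify
          exact h1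
        rw [h1', h1]
        refine Prod.Lex.right _ (Prod.Lex.left _ _ (card_lt_card ?_))
        rw [ssubset_iff_of_subset]
        · refine ⟨i, by simp, ?_⟩
          rw [mem_filter_univ, hc', update_self, add_comm]
          exact habs.ne
        · intro l hl
          rw [mem_filter_univ] at hl ⊢
          obtain rfl | hli := eq_or_ne l i
          · rfl
          · rwa [hc', update_of_ne hli] at hl
    obtain ⟨a₁, j₁, h1, h2⟩ := exists_closure_image_compl_of_sum_smul_eq_zero
      (update a j (a j - a i)) ha' c'
      ((Fintype.sum_update_add_smul_update_sub a c hji).trans h) i' hi'0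
      fun l ↦ hi' l (mem_univ l)
    exact ⟨a₁, j₁, h1, (AddSubmonoid.range_subset_closure_range_update_sub a hji).trans
      (AddSubmonoid.closure_le.2 h2)⟩
  · refine ⟨a, j, ha, ?_⟩
    rintro _ ⟨l, rfl⟩
    obtain rfl | hl := eq_or_ne l j
    · exact AddSubmonoid.subset_closure ⟨i, hji.symm, heq⟩
    · exact AddSubmonoid.subset_closure ⟨l, hl, rfl⟩
  · -- subtract `a j` from `a i`
    set c' := update c j (c j + c i) with hc'
    have hc'i : c' i = c i := update_of_ne hji.symm _ _
    have hc'j : c' j = c j + c i := update_self _ _ _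
    have ha' (l : ι) : 0 < update a i (a i - a j) l := by
      obtain rfl | hl := eq_or_ne l i
      · simpa using hlt
      · simpa [update_of_ne hl] using ha l
    have hdec : Prod.Lex (· < ·) (Prod.Lex (· < ·) (· < ·))
        ((c' i).natAbs, #{l | |c' l| = |c' i|}, #{l | c' l * c' i < 0})
        ((c i).natAbs, #{l | |c l| = |c i|}, #{l | c l * c i < 0}) := by
      have hli {l : ι} (hl : l ≠ j) : c' l = c l := update_of_ne hl _ _
      have hcard : #{l | |c' l| = |c i|} ≤ #{l | |c l| = |c i|} := by
        refine card_le_card fun l hl ↦ ?_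
        rw [mem_filter_univ] at hl ⊢
        obtain rfl | hl' := eq_or_ne l j
        · rw [hc'j] at hl
          exact absurd hl habs.ne
        · rwa [hli hl'] at hl
      rw [hc'i]
      refine Prod.Lex.right _ ?_
      obtain hcard | hcard := hcard.lt_or_eq
      · exact Prod.Lex.left _ _ hcard
      · rw [hcard]
        refine Prod.Lex.right _ (card_lt_card ?_)
        have hj0 : ¬ (c' j * c i < 0) := by
          have := hmax j
          rw [hc'j, not_lt]
          obtain ⟨h1, h2⟩ | ⟨h1, h2⟩ := mul_neg_iff.1 hj
          · rw [abs_of_pos h1, abs_of_neg h2] at this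
            exact mul_nonneg_of_nonpos_of_nonpos (by omega) h2.le
          · rw [abs_of_neg h1, abs_of_pos h2] at this
            exact mul_nonneg (by omega) h2.le
        rw [ssubset_iff_of_subset]
        · exact ⟨j, by rwa [mem_filter_univ], by rwa [mem_filter_univ]⟩
        · intro l hl
          rw [mem_filter_univ] at hl ⊢
          obtain rfl | hl' := eq_or_ne l j
          · exact hj
          · rwa [hli hl'] at hl
    obtain ⟨a₁, j₁, h1, h2⟩ := exists_closure_image_compl_of_sum_smul_eq_zero
      (update a i (a i - a j)) ha' c'
      ((Fintype.sum_update_add_smul_update_sub a c hji.symm).trans h) i (by rwa [hc'i]) (by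
        intro l
        rw [hc'i]
        obtain rfl | hl := eq_or_ne l j
        · rw [hc'j]
          exact habs.le
        · rw [hc', update_of_ne hl]
          exact hmax l)
    exact ⟨a₁, j₁, h1, (AddSubmonoid.range_subset_closure_range_update_sub a hji.symm).trans
      (AddSubmonoid.closure_le.2 h2)⟩
termination_by ((c i).natAbs, #{l | |c l| = |c i|}, #{l | c l * c i < 0})
decreasing_by all_goals exact hdec

/-- A finite set of positive elements of an ordered abelian group is contained in the monoid
generated by finitely many linearly independent positive elements. -/
theorem exists_finset_linearIndependent_subset_closure (T : Finset Γ) (hT : ∀ t ∈ T, 0 < t) :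
    ∃ T' : Finset Γ, (∀ t ∈ T', 0 < t) ∧ LinearIndependent ℤ (Subtype.val : T' → Γ) ∧
      (T : Set Γ) ⊆ AddSubmonoid.closure (T' : Set Γ) := by
  induction hn : #T using Nat.strong_induction_on generalizing T with
  | _ n ih =>
  by_cases hli : LinearIndependent ℤ (Subtype.val : T → Γ)
  · exact ⟨T, hT, hli, AddSubmonoid.subset_closure⟩
  rw [Fintype.not_linearIndependent_iff] at hli
  obtain ⟨c, hc, i₀, hi₀⟩ := hli
  obtain ⟨i, -, hi⟩ := exists_max_image univ (fun l ↦ |c l|) ⟨i₀, mem_univ i₀⟩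
  obtain ⟨a, j, ha, hTa⟩ := exists_closure_image_compl_of_sum_smul_eq_zero
    (Subtype.val : T → Γ) (fun t ↦ hT t t.2) c hc i
    (abs_pos.1 ((abs_pos.2 hi₀).trans_le (hi i₀ (mem_univ i₀)))) fun l ↦ hi l (mem_univ l)
  have hcard : #((univ.erase j).image a) < n := by
    rw [← hn, ← Fintype.card_coe T, ← card_univ]
    exact card_image_le.trans_lt (card_erase_lt_of_mem (mem_univ j))
  obtain ⟨T', h1, h2, h3⟩ := ih _ hcard ((univ.erase j).image a) (by
    intro t ht
    obtain ⟨l, -, rfl⟩ := mem_image.1 ht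
    exact ha l) rfl
  refine ⟨T', h1, h2, ?_⟩
  rw [Subtype.range_val] at hTa
  refine hTa.trans (AddSubmonoid.closure_le.2 ?_)
  convert h3 using 1
  ext
  simp

end Perron

theorem Valuation.le_map_sum_of_injOn {R M ι : Type*} [Ring R] [LinearOrderedCommGroupWithZero M]
    (v : Valuation R M) {s : Finset ι} {f : ι → R} (hf : Set.InjOn (fun i ↦ v (f i)) s) {i : ι}
    (hi : i ∈ s) : v (f i) ≤ v (∑ j ∈ s, f j) := by
  classical
  rcases eq_or_ne (v (f i)) 0 with h0 | h0
  · simp [h0]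
  obtain ⟨j, hj, hmax⟩ := s.exists_max_image (fun i ↦ v (f i)) ⟨i, hi⟩
  have hlt : v (∑ l ∈ s.erase j, f l) < v (f j) := by
    refine v.map_sum_lt (fun h ↦ h0 (le_zero_iff.1 (h ▸ hmax i hi))) fun l hl ↦ ?_
    rw [Finset.mem_erase] at hl
    exact lt_of_le_of_ne (hmax l hl.2) fun h ↦ hl.1 (hf hl.2 hj h)
  rw [← Finset.add_sum_erase s f hj, v.map_add_eq_of_lt_left hlt]
  exact hmax i hi

namespace Subalgebra

section Base

open Algebra

variable {k L M : Type*} [Field k] [Field L] [Algebra k L] [LinearOrderedCommGroupWithZero M]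
  {w : Valuation L M} {σ : M →*₀ L}

theorem map_algebraMap_eq_one (hk : ∀ c : k, w (algebraMap k L c) ≤ 1) {c : k} (hc : c ≠ 0) :
    w (algebraMap k L c) = 1 := by
  refine le_antisymm (hk c) ?_
  have h : w (algebraMap k L c) * w (algebraMap k L c⁻¹) = 1 := by
    rw [← map_mul, ← map_mul, mul_inv_cancel₀ hc, map_one, map_one]
  calc 1 = w (algebraMap k L c) * w (algebraMap k L c⁻¹) := h.symm
    _ ≤ w (algebraMap k L c) * 1 := mul_le_mul_right (hk _) _
    _ = _ := mul_one _

/-- Monomials in elements whose values are `ℤ`-linearly independent are algebraically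
independent. -/
theorem injective_aeval_of_linearIndependent (hσ : ∀ γ, w (σ γ) = γ)
    (hk : ∀ c : k, w (algebraMap k L c) ≤ 1) {ι : Type*} {t : ι → Additive Mˣ}
    (ht : LinearIndependent ℤ t) :
    Function.Injective (MvPolynomial.aeval (R := k) fun i ↦ σ ((t i).toMul⁻¹ : Mˣ)) := by
  have htN : LinearIndependent ℕ t := ht.restrict_scalars (fun a b h ↦ by simpa using h)
  have hval : ∀ m : ι →₀ ℕ, w (m.prod fun i e ↦ σ ((t i).toMul⁻¹ : Mˣ) ^ e) =
      ((Finsupp.linearCombination ℕ t m).toMul⁻¹ : Mˣ) := by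
    intro m
    simp only [Finsupp.prod, map_prod, map_pow, hσ, Finsupp.linearCombination_apply, Finsupp.sum,
      toMul_sum, toMul_nsmul, ← Finset.prod_inv_distrib, Units.coe_prod, ← inv_pow,
      Units.val_pow_eq_pow_val]
  rw [injective_iff_map_eq_zero]
  intro p hp
  by_contra hp0
  obtain ⟨m, hm⟩ := Finset.nonempty_iff_ne_empty.2 (mt MvPolynomial.support_eq_empty.1 hp0)
  have hterm : ∀ m ∈ p.support,
      w (algebraMap k L (p.coeff m) * m.prod fun i e ↦ σ ((t i).toMul⁻¹ : Mˣ) ^ e) =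
      ((Finsupp.linearCombination ℕ t m).toMul⁻¹ : Mˣ) := by
    intro m hm
    rw [map_mul, hval, map_algebraMap_eq_one hk (MvPolynomial.mem_support_iff.1 hm), one_mul]
  have h := w.le_map_sum_of_injOn (s := p.support)
    (f := fun m ↦ algebraMap k L (p.coeff m) * m.prod fun i e ↦ σ ((t i).toMul⁻¹ : Mˣ) ^ e)
    (fun m hm m' hm' h ↦ by
      simp only [hterm m hm, hterm m' hm', Units.val_inj, inv_inj] at h
      exact htN h) hm
  have hsum : ∑ m ∈ p.support,
      algebraMap k L (p.coeff m) * m.prod (fun i e ↦ σ ((t i).toMul⁻¹ : Mˣ) ^ e) = 0 := by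
    rw [← hp, MvPolynomial.aeval_def, MvPolynomial.eval₂_eq]
    rfl
  simp only [hsum, map_zero, hterm m hm, le_zero_iff] at h
  exact Units.ne_zero _ h

theorem exists_isCompleteIntersection_image_subset (hσ : ∀ γ, w (σ γ) = γ)
    (hk : ∀ c : k, w (algebraMap k L c) ≤ 1) {T : Set M} (hT : T.Finite) (hT1 : ∀ γ ∈ T, γ ≤ 1) :
    ∃ A : Subalgebra k L, IsCompleteIntersectionOfFiniteType k A ∧ (∀ a ∈ A, w a ≤ 1) ∧
      σ '' T ⊆ A := by
  classical
  have hfin : {t : Additive Mˣ | 0 < t ∧ ((t.toMul⁻¹ : Mˣ) : M) ∈ T}.Finite := by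
    refine Set.Finite.subset (hT.preimage
      (f := fun t : Additive Mˣ ↦ ((t.toMul⁻¹ : Mˣ) : M)) fun a _ b _ h ↦ ?_) fun t ht ↦ ht.2
    exact Additive.toMul.injective (inv_injective (Units.ext h))
  obtain ⟨T', hT'0, hT', hsub⟩ := exists_finset_linearIndependent_subset_closure hfin.toFinset
    (fun t ht ↦ ((Set.Finite.mem_toFinset _).1 ht).1)
  set φ : MvPolynomial T' k →ₐ[k] L :=
    MvPolynomial.aeval fun t : T' ↦ σ ((t : Additive Mˣ).toMul⁻¹ : Mˣ) with hφ
  have hinj : Function.Injective φ := injective_aeval_of_linearIndependent hσ hk hT'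
  refine ⟨φ.range, ?_, ?_, ?_⟩
  · exact (IsCompleteIntersectionOfFiniteType.mvPolynomial (k := k) (Fintype.card T')).of_algEquiv
      ((MvPolynomial.renameEquiv k (Fintype.equivFin T').symm).trans (AlgEquiv.ofInjective φ hinj))
  · rintro _ ⟨p, rfl⟩
    change w (φ p) ≤ 1
    induction p using MvPolynomial.induction_on with
    | C c => simpa [hφ] using hk c
    | add p q hp hq => rw [map_add]; exact (w.map_add _ _).trans (max_le hp hq)
    | mul_X p t hp =>
      rw [map_mul, map_mul]
      refine mul_le_one' hp ?_
      rw [hφ, MvPolynomial.aeval_X, hσ, ← Units.val_one, Units.val_le_val]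
      exact inv_le_one'.2 (hT'0 t t.2).le
  · rintro _ ⟨γ, hγ, rfl⟩
    rcases eq_or_ne γ 0 with rfl | h0
    · exact ⟨0, by simp⟩
    rcases (hT1 γ hγ).eq_or_lt with rfl | h1
    · exact ⟨1, by simp⟩
    have hcl : ∀ t ∈ AddSubmonoid.closure (T' : Set (Additive Mˣ)),
        σ ((t.toMul⁻¹ : Mˣ) : M) ∈ φ.range := by
      intro t ht
      induction ht using AddSubmonoid.closure_induction with
      | mem t ht => exact ⟨MvPolynomial.X ⟨t, ht⟩, by simp [hφ]⟩
      | zero => simp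
      | add s t _ _ hs ht =>
        rw [toMul_add, mul_inv, Units.val_mul, map_mul]
        exact mul_mem hs ht
    have := hcl (Additive.ofMul (Units.mk0 γ h0)⁻¹) (hsub ?_)
    · simpa using this
    · rw [Finset.mem_coe, Set.Finite.mem_toFinset]
      refine ⟨?_, by simpa using hγ⟩
      change 1 < (Units.mk0 γ h0)⁻¹
      rw [one_lt_inv', ← Units.val_lt_val]
      simpa using h1

/-- An element of the span of the image of `σ` is `σ` of its value times a combination of
finitely many `σ γ` with `γ ≤ 1`. -/
theorem exists_finite_eq_mul (hσ : ∀ γ, w (σ γ) = γ)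
    (hk : ∀ c : k, w (algebraMap k L c) ≤ 1) {p : L} (hp : p ∈ Submodule.span k (Set.range σ)) :
    ∃ T : Set M, T.Finite ∧ (∀ γ ∈ T, γ ≤ 1) ∧ ∀ A : Subalgebra k L, σ '' T ⊆ A →
      ∃ u ∈ A, p = σ (w p) * u := by
  rcases eq_or_ne p 0 with rfl | hp0
  · exact ⟨∅, Set.finite_empty, by simp, fun A _ ↦ ⟨0, zero_mem A, by simp⟩⟩
  obtain ⟨c, rfl⟩ := Finsupp.mem_span_range_iff_exists_finsupp.1 hp
  set p := c.sum fun γ a ↦ a • σ γ with hpdef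
  have hwp : w p ≠ 0 := (w.ne_zero_iff).2 hp0
  have hval : ∀ γ ∈ c.support, w (c γ • σ γ) = γ := by
    intro γ hγ
    rw [Algebra.smul_def, map_mul, hσ, map_algebraMap_eq_one hk (Finsupp.mem_support_iff.1 hγ),
      one_mul]
  refine ⟨(fun γ ↦ γ / w p) '' c.support, c.support.finite_toSet.image _, ?_, fun A hA ↦ ?_⟩
  · rintro _ ⟨γ, hγ, rfl⟩
    have h := w.le_map_sum_of_injOn (s := c.support) (f := fun γ ↦ c γ • σ γ)
      (fun γ hγ γ' hγ' h ↦ by simpa only [hval γ hγ, hval γ' hγ'] using h) hγ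
    rw [hval γ hγ] at h
    exact div_le_one_of_le₀ h zero_le
  · refine ⟨∑ γ ∈ c.support, c γ • σ (γ / w p), sum_mem fun γ hγ ↦ A.smul_mem
      (hA ⟨_, ⟨γ, hγ, rfl⟩, rfl⟩) _, ?_⟩
    rw [Finset.mul_sum]
    refine Finset.sum_congr rfl fun γ _ ↦ ?_
    rw [mul_smul_comm, ← map_mul, mul_div_cancel₀ _ hwp]

theorem hasLocalCIs_of_span (hσ : ∀ γ, w (σ γ) = γ)
    (hk : ∀ c : k, w (algebraMap k L c) ≤ 1)
    (hL : ∀ d : L, ∃ p ∈ Submodule.span k (Set.range σ), ∃ q ∈ Submodule.span k (Set.range σ),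
      q ≠ 0 ∧ d * q = p) : HasLocalCIs k w := by
  intro D hD hD1
  choose p hp q hq hq0 hpq using hL
  choose T hT hT1 hTp using fun d ↦ exists_finite_eq_mul hσ hk (hp d)
  choose S hS hS1 hSq using fun d ↦ exists_finite_eq_mul hσ hk (hq d)
  obtain ⟨A, hA, hA1, hsub⟩ := exists_isCompleteIntersection_image_subset hσ hk
    (T := ⋃ d ∈ D, (T d ∪ S d ∪ {w d})) (hD.biUnion fun d _ ↦
      ((hT d).union (hS d)).union (Set.finite_singleton _)) (by
      simp only [Set.mem_iUnion, Set.mem_union, Set.mem_singleton_iff]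
      rintro γ ⟨d, hd, (h | h) | rfl⟩
      exacts [hT1 d _ h, hS1 d _ h, hD1 d hd])
  refine ⟨A.valLoc w, isLocalCI_valLoc (fun a ha ↦ ((w.ne_zero_iff).1 ha).isUnit) hA1 hA,
    fun d hd ↦ ?_⟩
  have hsub' : σ '' (T d ∪ S d ∪ {w d}) ⊆ A :=
    (Set.image_mono (Set.subset_biUnion_of_mem (u := fun d ↦ T d ∪ S d ∪ {w d}) hd)).trans hsub
  obtain ⟨u, hu, hpu⟩ := hTp d A ((Set.image_mono fun γ h ↦ Or.inl (Or.inl h)).trans hsub')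
  obtain ⟨u', hu', hqu⟩ := hSq d A ((Set.image_mono fun γ h ↦ Or.inl (Or.inr h)).trans hsub')
  have hwd : σ (w d) ∈ A := hsub' ⟨w d, Or.inr rfl, rfl⟩
  have hwq : w (q d) ≠ 0 := (w.ne_zero_iff).2 (hq0 d)
  have hwu : w u' = 1 := by
    have h := congrArg w hqu
    rw [map_mul, hσ] at h
    exact mul_left_cancel₀ hwq (by rw [← h, mul_one])
  refine ⟨u', hu', hwu, ?_⟩
  have hσq : σ (w (q d)) ≠ 0 := (map_ne_zero σ).2 hwq
  have : u' * d = σ (w d) * u := by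
    refine mul_left_cancel₀ hσq ?_
    rw [← mul_assoc, ← hqu, mul_comm (q d), hpq, ← mul_assoc, ← map_mul, mul_comm (w (q d)),
      ← map_mul, hpq, ← hpu]
  rw [this]
  exact mul_mem hwd hu

end Base

end Subalgebra

/-- A surjective valuation on a field with free value group admits a multiplicative section. -/
theorem Valuation.exists_section {K M : Type*} [Field K] [LinearOrderedCommGroupWithZero M]
    (v : Valuation K M) (hv : Function.Surjective v) [Module.Free ℤ (Additive Mˣ)] :
    ∃ σ : M →*₀ K, ∀ γ, v (σ γ) = γ := by
  classical
  let f : Additive Kˣ →ₗ[ℤ] Additive Mˣ :=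
    (MonoidHom.toAdditive (Units.map (v : K →* M))).toIntLinearMap
  have hf : Function.Surjective f := by
    intro t
    obtain ⟨x, hx⟩ := hv t.toMul
    have hx0 : x ≠ 0 := fun h ↦ t.toMul.ne_zero (by rw [← hx, h, map_zero])
    refine ⟨Additive.ofMul (Units.mk0 x hx0), Additive.toMul.injective (Units.ext ?_)⟩
    exact hx
  obtain ⟨g, hg⟩ := Module.projective_lifting_property f LinearMap.id hf
  let s : M → K := fun γ ↦ if h : γ = 0 then 0 else
    ((g (Additive.ofMul (Units.mk0 γ h))).toMul : Kˣ)
  have hs : ∀ γ : Mˣ, s γ = ((g (Additive.ofMul γ)).toMul : Kˣ) := by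
    intro γ
    simp [s]
  have hs0 : s 0 = 0 := by simp [s]
  refine ⟨⟨⟨s, hs0⟩, ?_, ?_⟩, ?_⟩
  · change s 1 = 1
    simpa using hs 1
  · intro a b
    change s (a * b) = s a * s b
    rcases eq_or_ne a 0 with rfl | ha
    · simp [hs0]
    rcases eq_or_ne b 0 with rfl | hb
    · simp [hs0]
    lift a to Mˣ using ha.isUnit
    lift b to Mˣ using hb.isUnit
    rw [← Units.val_mul, hs, hs, hs, ofMul_mul, map_add, toMul_add, Units.val_mul]
  · intro γ
    change v (s γ) = γ
    rcases eq_or_ne γ 0 with rfl | hγ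
    · simp [hs0]
    lift γ to Mˣ using hγ.isUnit
    rw [hs]
    exact congrArg (fun t : Additive Mˣ ↦ ((t.toMul : Mˣ) : M))
      (LinearMap.congr_fun hg (Additive.ofMul γ))

namespace Subalgebra

section Fields

open IntermediateField

variable {k K M : Type*} [Field k] [Field K] [Algebra k K] [LinearOrderedCommGroupWithZero M]
  {v : Valuation K M} {σ : M →*₀ K}

/-- The corestriction of a homomorphism with values in an intermediate field. -/
def codRestrictField (F : IntermediateField k K) (σ : M →*₀ K) (h : ∀ γ, σ γ ∈ F) : M →*₀ F where
  toFun γ := ⟨σ γ, h γ⟩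
  map_zero' := Subtype.ext (map_zero σ)
  map_one' := Subtype.ext (map_one σ)
  map_mul' a b := Subtype.ext (map_mul σ a b)

theorem hasLocalCIs_adjoin_range (hσ : ∀ γ, v (σ γ) = γ) (hk : ∀ c : k, v (algebraMap k K c) ≤ 1) :
    HasLocalCIs k (v.comap (algebraMap (adjoin k (Set.range σ)) K)) := by
  have hmem : ∀ γ, σ γ ∈ adjoin k (Set.range σ) := fun γ ↦ subset_adjoin k _ ⟨γ, rfl⟩
  refine hasLocalCIs_of_span (σ := codRestrictField _ σ hmem) hσ hk ?_
  have hspan : Subalgebra.toSubmodule (Algebra.adjoin k (Set.range σ)) =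
      Submodule.span k (Set.range σ) := by
    refine Algebra.adjoin_eq_span_of_subset _ (Set.Subset.trans ?_ Submodule.subset_span)
    have h : Submonoid.closure (Set.range σ) ≤ MonoidHom.mrange (σ : M →* K) :=
      (Submonoid.closure_le).2 fun x hx ↦ hx
    exact h
  have hlift : ∀ x ∈ Algebra.adjoin k (Set.range σ), ∃ x' ∈ Submodule.span k
      (Set.range (codRestrictField (adjoin k (Set.range σ)) σ hmem)), (x' : K) = x := by
    intro x hx
    rw [← Subalgebra.mem_toSubmodule, hspan] at hx
    have hrange : Set.range σ = (adjoin k (Set.range σ)).val.toLinearMap ''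
        Set.range (codRestrictField (adjoin k (Set.range σ)) σ hmem) := by
      rw [← Set.range_comp]
      rfl
    rw [hrange, ← Submodule.map_span] at hx
    exact hx
  rintro ⟨d, hd⟩
  obtain ⟨p, hp, q, hq, rfl⟩ := mem_adjoin_iff_div.1 hd
  rcases eq_or_ne q 0 with rfl | hq0
  · refine ⟨0, zero_mem _, 1, Submodule.subset_span ⟨1, map_one _⟩, one_ne_zero, ?_⟩
    exact Subtype.ext (by simp)
  obtain ⟨p', hp', rfl⟩ := hlift p hp
  obtain ⟨q', hq', rfl⟩ := hlift q hq
  exact ⟨p', hp', q', hq', fun h ↦ hq0 (by simp [h]),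
    Subtype.ext (div_mul_cancel₀ (p' : K) hq0)⟩

theorem HasLocalCIs.restrictScalars_adjoin {F : IntermediateField k K}
    (h : HasLocalCIs k (v.comap (algebraMap F K))) (hF : ∀ γ, σ γ ∈ F) (hσ : ∀ γ, v (σ γ) = γ)
    {y : K} (hy : v y ≤ 1) :
    HasLocalCIs k (v.comap (algebraMap ((adjoin F {y}).restrictScalars k) K)) := by
  change HasLocalCIs k (v.comap (algebraMap (adjoin F {y}) K))
  refine HasLocalCIs.of_adjoin (L := F) h (σ := codRestrictField F σ hF) hσ
    (y := AdjoinSimple.gen F y) hy ?_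
  rintro ⟨d, hd⟩
  have hval : ∀ f : F[X], ((aeval (AdjoinSimple.gen F y) f : adjoin F {y}) : K) = aeval y f := by
    intro f
    exact (aeval_algHom_apply (adjoin F {y}).val (AdjoinSimple.gen F y) f).symm
  obtain ⟨f, g, rfl⟩ := (mem_adjoin_simple_iff F _).1 hd
  by_cases hg : aeval y g = 0
  · refine ⟨0, 1, by simp, Subtype.ext ?_⟩
    simp [hg]
  · refine ⟨f, g, fun h ↦ hg (by rw [← hval, h]; rfl), Subtype.ext ?_⟩
    rw [hval]
    change _ * ((aeval (AdjoinSimple.gen F y) g : adjoin F {y}) : K) = _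
    rw [hval, div_mul_cancel₀ _ hg]

theorem hasLocalCIs_adjoin_range_union (hσ : ∀ γ, v (σ γ) = γ)
    (hk : ∀ c : k, v (algebraMap k K c) ≤ 1) {T : Set K} (hT : T.Finite) (hT1 : ∀ y ∈ T, v y ≤ 1) :
    HasLocalCIs k (v.comap (algebraMap (adjoin k (Set.range σ ∪ T)) K)) := by
  induction T, hT using Set.Finite.induction_on with
  | empty =>
    rw [Set.union_empty]
    exact hasLocalCIs_adjoin_range hσ hk
  | @insert y T _ _ ih =>
    have h := (ih fun y hy ↦ hT1 y (Set.mem_insert_of_mem _ hy)).restrictScalars_adjoin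
      (fun γ ↦ subset_adjoin k _ (Or.inl ⟨γ, rfl⟩)) hσ (hT1 y (Set.mem_insert _ _))
    rwa [adjoin_adjoin_left, Set.union_assoc, Set.union_singleton] at h

/-- If the valuation of `K` admits a multiplicative section, then every finite subset of its
valuation ring lies in a complete intersection subalgebra of the valuation ring. -/
theorem exists_isCompleteIntersection_of_finite (hσ : ∀ γ, v (σ γ) = γ)
    (hk : ∀ c : k, v (algebraMap k K c) ≤ 1) {D : Set K} (hD : D.Finite) (hD1 : ∀ d ∈ D, v d ≤ 1) :
    ∃ A : Subalgebra k K, Algebra.IsCompleteIntersectionOfFiniteType k A ∧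
      (∀ a ∈ A, v a ≤ 1) ∧ D ⊆ A := by
  set F := adjoin k (Set.range σ ∪ D)
  obtain ⟨O, hO, hDO⟩ := hasLocalCIs_adjoin_range_union hσ hk hD hD1
    ((algebraMap F K) ⁻¹' D) (hD.preimage (algebraMap F K).injective.injOn) fun d hd ↦ hD1 _ hd
  have hO' := hO.map_of_injective (ψ := F.val) (w := v) (fun x ↦ rfl) F.val.injective
  obtain ⟨A, hA, hDA⟩ := hO'.exists_isModel_of_finite hD fun d hd ↦
    ⟨⟨d, subset_adjoin k _ (Or.inr hd)⟩, hDO hd, rfl⟩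
  exact ⟨A, hA.isCompleteIntersection, fun a ha ↦ hO'.le_one a (hA.le ha), hDA⟩

end Fields

end Subalgebra

theorem ValuationRing.exists_isCompleteIntersection_of_finite {k V : Type*} (K : Type*) [Field k]
    [CommRing V] [IsDomain V] [ValuationRing V] [Algebra k V] [Field K] [Algebra V K]
    [IsFractionRing V K] [Algebra k K] [IsScalarTower k V K]
    (hfree : Module.Free ℤ (Additive (ValuationRing.ValueGroup V K)ˣ)) {D : Set V}
    (hD : D.Finite) :
    ∃ A : Subalgebra k V, Algebra.IsCompleteIntersectionOfFiniteType k A ∧ D ⊆ A := by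
  have hx_int : ∀ x : K, ValuationRing.valuation V K x ≤ 1 ↔ ∃ a : V, algebraMap V K a = x :=
    ValuationRing.mem_integer_iff V K
  obtain ⟨σ, hσ⟩ := (ValuationRing.valuation V K).exists_section Quotient.mk''_surjective
  obtain ⟨A, hA, hA1, hDA⟩ := Subalgebra.exists_isCompleteIntersection_of_finite (k := k) hσ
    (fun c ↦ (hx_int _).2 ⟨algebraMap k V c, (IsScalarTower.algebraMap_apply k V K c).symm⟩)
    (hD.image (algebraMap V K)) (by rintro _ ⟨d, -, rfl⟩; exact (hx_int _).2 ⟨d, rfl⟩)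
  set ψ : V →ₐ[k] K := IsScalarTower.toAlgHom k V K
  have hmap : (A.comap ψ).map ψ = A := by
    refine le_antisymm (Subalgebra.map_le.2 le_rfl) fun a ha ↦ ?_
    obtain ⟨b, rfl⟩ := (hx_int a).1 (hA1 a ha)
    exact ⟨b, ha, rfl⟩
  refine ⟨A.comap ψ, ?_, fun d hd ↦ hDA ⟨d, hd, rfl⟩⟩
  rw [← hmap] at hA
  exact hA.of_algEquiv ((A.comap ψ).equivMapOfInjective ψ (IsFractionRing.injective V K)).symm

/-- Let `V` be a valuation ring containing its residue field `k`, with fraction field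
`K` and value group a free abelian group.  Then `V` is a filtered union of its
`k`-subalgebras which are complete intersection `k`-algebras. -/
theorem valuation_ring_filtered_union_complete_intersection
    (k V K : Type u) [Field k] [CommRing V] [IsDomain V] [ValuationRing V] [Algebra k V]
    [Field K] [Algebra V K] [IsFractionRing V K] [Algebra k K] [IsScalarTower k V K]
    -- `V` contains its residue field `k`:
    (hres : Function.Bijective ((IsLocalRing.residue V).comp (algebraMap k V)))
    -- the value group `Γ` is a free abelian group:
    (hfree : Module.Free ℤ (Additive (ValuationRing.ValueGroup V K)ˣ)) :
    Subalgebra.IsFilteredUnion (fun A : Subalgebra k V =>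
      Algebra.IsCompleteIntersectionOfFiniteType k A) := by
  have key : ∀ D : Set V, D.Finite → ∃ A : Subalgebra k V,
      Algebra.IsCompleteIntersectionOfFiniteType k A ∧ D ⊆ A := fun D hD ↦
    ValuationRing.exists_isCompleteIntersection_of_finite K hfree hD
  refine ⟨?_, ?_, fun s ↦ ?_⟩
  · obtain ⟨A, hA, -⟩ := key ∅ Set.finite_empty
    exact ⟨A, hA⟩
  · intro A hA B hB
    obtain ⟨S, rfl⟩ := A.fg_iff_finiteType.2 hA.finiteType
    obtain ⟨T, rfl⟩ := B.fg_iff_finiteType.2 hB.finiteType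
    obtain ⟨C, hC, hSC⟩ := key (S ∪ T) (S.finite_toSet.union T.finite_toSet)
    exact ⟨C, hC, Algebra.adjoin_le (Set.subset_union_left.trans hSC),
      Algebra.adjoin_le (Set.subset_union_right.trans hSC)⟩
  · obtain ⟨A, hA, hs⟩ := key {s} (Set.finite_singleton s)
    exact ⟨A, hA, hs rfl⟩
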